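/- Let ξ be a walk lift of some η ∈ X and let t ≥ 1 be an integer. Then: (i) for every k ≥ 1 and every k-soliton γ of η, #{i ∈ ℤ : γ ⊂ (−∞, s_k(ξ,i)) and γ^t ⊂ [s_k^t(ξ,i), ∞)} = k·t, i.e., the right-to-left flow of relabeled k-slots through a tagged k-soliton between times 0 and t is exactly kt; (ii) consequently the k-component of T^t ξ is a shift of that of ξ: M_k(T^t ξ)(i) = M_k ξ(i − o_k^t(ξ) − kt) for all i ∈ ℤ; (iii) for each k, the offset o_k^t(ξ) is determined by the components (M_m ξ)_{m>k} alone. -/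

import Mathlib

open MeasureTheory Filter Finset

/-- A ball configuration: a box at each integer, occupied (`true`) or empty (`false`). -/
abbrev Cfg := ℤ → Bool

/-- Numerical (integer) value of a box. -/
def valZ (b : Bool) : ℤ := if b then 1 else 0

/-- Numerical (real) value of a box. -/
def valR (b : Bool) : ℝ := if b then 1 else 0

/-- `x` is a record of the configuration `η`:
for every `z ≤ x`, the number of balls in `[z,x]` is strictly smaller than the
number of empty boxes in `[z,x]`. -/
def isRecord (η : Cfg) (x : ℤ) : Prop :=
  ∀ z ≤ x, (∑ y ∈ Finset.Icc z x, valZ (η y)) < ∑ y ∈ Finset.Icc z x, (1 - valZ (η y))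

open Classical in
/-- The box-ball (Takahashi–Satsuma) operator `T`. -/
noncomputable def bbsT (η : Cfg) : Cfg := fun x => if isRecord η x then false else !(η x)

/-- `η` has asymptotic density `lam` of balls on both half lines. -/
def inXlam (lam : ℝ) (η : Cfg) : Prop :=
  Tendsto (fun y : ℕ => (∑ x ∈ Finset.Icc (-(y : ℤ)) 0, valR (η x)) / (y : ℝ))
    atTop (nhds lam) ∧
  Tendsto (fun y : ℕ => (∑ x ∈ Finset.Icc (0 : ℤ) (y : ℤ), valR (η x)) / (y : ℝ))
    atTop (nhds lam)

/-- `η ∈ 𝒳`: it has a well-defined density `0 < lam < 1/2`. -/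
def inX (η : Cfg) : Prop := ∃ lam : ℝ, 0 < lam ∧ lam < 1 / 2 ∧ inXlam lam η

/-- `ξ` is a walk lift of the configuration `η`. -/
def IsLift (η : Cfg) (ξ : ℤ → ℤ) : Prop :=
  ∀ x : ℤ, ξ x - ξ (x - 1) = 2 * valZ (η x) - 1

/-- Running minimum `min_{y ≤ x} ξ(y)` of a walk. -/
noncomputable def runMin (ξ : ℤ → ℤ) (x : ℤ) : ℤ := sInf (ξ '' Set.Iic x)

/-- The box-ball operator on walks: reflection at the running minimum. -/
noncomputable def liftT (ξ : ℤ → ℤ) : ℤ → ℤ := fun x => 2 * runMin ξ x - ξ x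

/-- The canonical walk lift of `η` with value `0` at the origin. -/
noncomputable def xi0 (η : Cfg) : ℤ → ℤ := fun x =>
  if 0 ≤ x then ∑ y ∈ Finset.Icc 1 x, (2 * valZ (η y) - 1)
  else -∑ y ∈ Finset.Icc (x + 1) 0, (2 * valZ (η y) - 1)
/-- Maximal runs of a word of (position, letter) pairs. -/
def runsOf : List (ℤ × Bool) → List (List (ℤ × Bool))
  | [] => []
  | a :: l =>
    match runsOf l with
    | [] => [[a]]
    | r :: rs =>
      if (r.head?.map Prod.snd) = some a.2 then (a :: r) :: rs else [a] :: r :: rs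

/-- Takahashi–Satsuma step: find the leftmost run whose length is at least the
length of the run preceding it; the soliton consists of the preceding run
together with the first (that many) letters of the selected run. -/
def findSoliton : List (List (ℤ × Bool)) → Option (List (ℤ × Bool))
  | r1 :: r2 :: rest =>
    if r1.length ≤ r2.length then some (r1 ++ r2.take r1.length)
    else findSoliton (r2 :: rest)
  | _ => none

/-- Iterated Takahashi–Satsuma algorithm (with fuel): repeatedly identify the
soliton given by `findSoliton` and remove its letters from the word. -/
def tsAux : ℕ → List (ℤ × Bool) → List (List (ℤ × Bool))
  | 0, _ => []
  | fuel + 1, w =>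
    match findSoliton (runsOf w) with
    | none => []
    | some s => s :: tsAux fuel (w.filter (fun a => !((s.map Prod.fst).contains a.1)))

/-- The solitons identified by the Takahashi–Satsuma algorithm in a finite word. -/
def tsSolitons (w : List (ℤ × Bool)) : List (List (ℤ × Bool)) := tsAux w.length w

/-- The word (with positions) strictly between sites `y1` and `y2`. -/
def excursionWord (η : Cfg) (y1 y2 : ℤ) : List (ℤ × Bool) :=
  (List.range (y2 - y1 - 1).toNat).map fun n => (y1 + 1 + n, η (y1 + 1 + n))

/-- `Γ_k η`: the set of `k`-solitons of `η`, each identified with the set of `2k`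
sites it occupies.  A `k`-soliton is obtained by applying the Takahashi–Satsuma
algorithm to an excursion of `η` (the word between two consecutive records). -/
def Gamma (η : Cfg) (k : ℕ) : Set (Finset ℤ) :=
  {γ | ∃ y1 y2 : ℤ, y1 < y2 ∧ isRecord η y1 ∧ isRecord η y2 ∧
    (∀ z : ℤ, y1 < z → z < y2 → ¬ isRecord η z) ∧
    ∃ s ∈ tsSolitons (excursionWord η y1 y2), s.length = 2 * k ∧
      γ = (s.map Prod.fst).toFinset}

/-- The head of a soliton `γ` of `η`: the positions of its ones. -/
def headF (η : Cfg) (γ : Finset ℤ) : Finset ℤ := γ.filter fun x => η x = true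

/-- The tail of a soliton `γ` of `η`: the positions of its zeros. -/
def tailF (η : Cfg) (γ : Finset ℤ) : Finset ℤ := γ.filter fun x => η x = false
/-- `x` is a `k`-slot of `η`: either a record, or the `j`-th smallest site of the
tail or of the head of some soliton, with `j > k` (slot level `j - 1 ≥ k`). -/
def IsKSlot (η : Cfg) (k : ℕ) (x : ℤ) : Prop :=
  isRecord η x ∨ ∃ m : ℕ, ∃ γ ∈ Gamma η m,
    (x ∈ tailF η γ ∧ k < ((tailF η γ).filter fun y => y ≤ x).card) ∨
    (x ∈ headF η γ ∧ k < ((headF η γ).filter fun y => y ≤ x).card)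

open Classical in
/-- Increasing enumeration of a (doubly unbounded, locally finite) set `S ⊆ ℤ`,
normalized so that the `0`-th element is the base point `b`.  (Junk value if no
such enumeration exists.) -/
noncomputable def enumZ (S : Set ℤ) (b : ℤ) : ℤ → ℤ :=
  if h : ∃ f : ℤ → ℤ, StrictMono f ∧ f 0 = b ∧ Set.range f = S then h.choose
  else fun _ => 0

/-- Position `r(ξ,j)` of Record `j` of a walk `ξ`: leftmost site where `ξ` takes
the value `-j`. -/
noncomputable def recPos (ξ : ℤ → ℤ) (j : ℤ) : ℤ := sInf {x : ℤ | ξ x = -j}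

/-- `s_k(ξ,i)`: the `i`-th `k`-slot of the configuration `η` lifted by the walk
`ξ`, enumerated increasingly and normalized by `s_k(ξ,0) = r(ξ,0)`. -/
noncomputable def skEnum (η : Cfg) (ξ : ℤ → ℤ) (k : ℕ) : ℤ → ℤ :=
  enumZ {x : ℤ | IsKSlot η k x} (recPos ξ 0)

/-- `M_k ξ (i)`: the number of `k`-solitons appended to the `i`-th `k`-slot,
i.e. contained in `[s_k(ξ,i)+1, s_k(ξ,i+1)-1]`. -/
noncomputable def Mk (η : Cfg) (ξ : ℤ → ℤ) (k : ℕ) (i : ℤ) : ℕ :=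
  Set.ncard {γ | γ ∈ Gamma η k ∧
    ∀ x ∈ γ, skEnum η ξ k i < x ∧ x < skEnum η ξ k (i + 1)}

open Classical in
/-- The trajectory `γ^t` of a tagged `k`-soliton `γ` of `η`: `γ^0 = γ` and
`γ^{t+1}` is the `k`-soliton of `T^{t+1} η` whose head is the tail of `γ^t`. -/
noncomputable def solTraj (η : Cfg) (k : ℕ) (γ : Finset ℤ) : ℕ → Finset ℤ
  | 0 => γ
  | t + 1 =>
    if h : ∃ γ' ∈ Gamma (bbsT^[t + 1] η) k,
        headF (bbsT^[t + 1] η) γ' = tailF (bbsT^[t] η) (solTraj η k γ t)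
    then h.choose else ∅

/-- `J_m^t ξ`: the flow of `m`-solitons through Record `0` by time `t`. -/
noncomputable def Jflow (η : Cfg) (ξ : ℤ → ℤ) (m : ℕ) (t : ℕ) : ℕ :=
  Set.ncard {γ | γ ∈ Gamma η m ∧ (∀ x ∈ γ, x < recPos ξ 0) ∧
    ∀ x ∈ solTraj η m γ t, recPos (liftT^[t] ξ) 0 ≤ x}

/-- `o_k^t(ξ) = Σ_{m>k} 2(m-k)·J_m^t ξ`: the flow of `k`-slots through Record
`0` by time `t`, counted as the number of pairs (an `m`-soliton `γ` with `m > k`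
crossing Record `0` by time `t`, a site of `γ` of slot level `≥ k`); each such
`γ` carries exactly `2(m-k)` such sites. -/
noncomputable def oOff (η : Cfg) (ξ : ℤ → ℤ) (k : ℕ) (t : ℕ) : ℕ :=
  Set.ncard {p : Finset ℤ × ℤ | ∃ m : ℕ, k < m ∧ p.1 ∈ Gamma η m ∧
    (∀ x ∈ p.1, x < recPos ξ 0) ∧
    (∀ x ∈ solTraj η m p.1 t, recPos (liftT^[t] ξ) 0 ≤ x) ∧
    ((p.2 ∈ tailF η p.1 ∧ k < ((tailF η p.1).filter fun y => y ≤ p.2).card) ∨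
     (p.2 ∈ headF η p.1 ∧ k < ((headF η p.1).filter fun y => y ≤ p.2).card))}

/-- The relabeled `i`-th `k`-slot at time `t`:
`s_k^t(ξ,i) = s_k(T^t ξ, o_k^t(ξ) + i)`. -/
noncomputable def skEnumT (η : Cfg) (ξ : ℤ → ℤ) (k : ℕ) (t : ℕ) (i : ℤ) : ℤ :=
  skEnum (bbsT^[t] η) (liftT^[t] ξ) k ((oOff η ξ k t : ℤ) + i)


/-! ### Part 1: the Takahashi–Satsuma algorithm and seat numbers -/

/-- Carrier update. -/
def upd (σ : ℤ → ℕ) (W : ℕ → Bool) (a : ℤ × Bool) : ℕ → Bool := Function.update W (σ a.1) a.2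

/-- Final carrier state. -/
def St (σ : ℤ → ℕ) (W : ℕ → Bool) (l : List (ℤ × Bool)) : ℕ → Bool := l.foldl (upd σ) W

/-- `σ` is a valid seat labelling of the word. -/
def Val (σ : ℤ → ℕ) : (ℕ → Bool) → List (ℤ × Bool) → Prop
  | _, [] => True
  | W, a :: l => W (σ a.1) = !a.2 ∧ (∀ j < σ a.1, W j = a.2) ∧ Val σ (upd σ W a) l

theorem St_append (σ : ℤ → ℕ) (W : ℕ → Bool) (l m : List (ℤ × Bool)) :
    St σ W (l ++ m) = St σ (St σ W l) m := by simp [St]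

theorem Val_append (σ : ℤ → ℕ) (W : ℕ → Bool) (l m : List (ℤ × Bool)) :
    Val σ W (l ++ m) ↔ Val σ W l ∧ Val σ (St σ W l) m := by
  induction l generalizing W with
  | nil => simp [Val, St]
  | cons a l ih =>
    simp only [List.cons_append, Val, ih]
    simp [St, and_assoc]

theorem blockLem (σ : ℤ → ℕ) (b : Bool) (l : List (ℤ × Bool)) (hl : ∀ a ∈ l, a.2 = b) :
    ∀ (W : ℕ → Bool) (i n : ℕ), (∀ j < i, W j = b) → (∀ j, i ≤ j → j < n → W j = !b) →
    i + l.length ≤ n → Val σ W l →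
    l.map (fun a => σ a.1) = List.range' i l.length ∧
    ∀ j, St σ W l j = if i ≤ j ∧ j < i + l.length then b else W j := by
  induction l with
  | nil =>
    intro W i n _ _ _ _
    refine ⟨by simp, ?_⟩
    intro j
    simp only [St, List.foldl_nil, List.length_nil]
    rw [if_neg (by omega)]
  | cons a l ih =>
    intro W i n h1 h2 h3 hv
    obtain ⟨v1, v2, v3⟩ := hv
    have hab : a.2 = b := hl a (by simp)
    simp only [List.length_cons] at h3
    have hs : σ a.1 = i := by
      rcases lt_trichotomy (σ a.1) i with h | h | h
      · have := h1 _ h; rw [v1, hab] at this; simp at this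
      · exact h
      · have := v2 _ h; rw [h2 i le_rfl (by omega), hab] at this; simp at this
    have := ih (fun c hc => hl c (by simp [hc])) (upd σ W a) (i+1) n ?_ ?_ (by omega) v3
    · obtain ⟨e1, e2⟩ := this
      refine ⟨by simp [e1, hs, List.range'_succ], ?_⟩
      intro j
      have : St σ W (a :: l) j = St σ (upd σ W a) l j := by simp [St]
      rw [this, e2 j]
      simp only [upd, hs, hab, Function.update_apply, List.length_cons]
      split_ifs <;> first | rfl | omega
    · intro j hj
      simp only [upd, hs, hab, Function.update_apply]
      split_ifs with h
      · rfl
      · exact h1 j (by omega)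
    · intro j hj hj'
      simp only [upd, hs, hab, Function.update_apply]
      rw [if_neg (by omega)]
      exact h2 j (by omega) hj'

/-- Alternating nonempty runs, the first with letter `b`. -/
def ROK : Bool → List (List (ℤ × Bool)) → Prop
  | _, [] => True
  | b, r :: rs => r ≠ [] ∧ (∀ a ∈ r, a.2 = b) ∧ ROK (!b) rs

theorem runsOf_ok (a : ℤ × Bool) (l : List (ℤ × Bool)) :
    (runsOf (a :: l)).flatten = a :: l ∧ ROK a.2 (runsOf (a :: l)) ∧ runsOf (a :: l) ≠ [] := by
  induction l generalizing a with
  | nil => simp [runsOf, ROK]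
  | cons c l ih =>
    obtain ⟨h1, h2, h3⟩ := ih c
    rw [runsOf]
    revert h1 h2 h3
    generalize runsOf (c :: l) = R
    intro h1 h2 h3
    cases R with
    | nil => simp at h3
    | cons r rs =>
      obtain ⟨hr, hr2, hr3⟩ := h2
      obtain ⟨d, r', rfl⟩ := List.exists_cons_of_ne_nil hr
      have hd : d = c := by simpa using congrArg List.head? h1
      subst hd
      simp only [List.head?_cons, Option.map_some, Option.some.injEq]
      split_ifs with hda
      · refine ⟨by simpa using h1, ?_, by simp⟩
        refine ⟨by simp, ?_, ?_⟩
        · intro e he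
          rcases List.mem_cons.1 he with rfl | he
          · rfl
          · rw [hr2 e he, hda]
        · rw [← hda]; exact hr3
      · refine ⟨by simpa using h1, ?_, by simp⟩
        have : d.2 = !a.2 := by
          cases hh : d.2 <;> cases hh' : a.2 <;> simp_all
        refine ⟨by simp, by simp, ?_⟩
        rw [← this]
        exact ⟨hr, hr2, hr3⟩

/-- Shape of a soliton. -/
def SolShape (σ : ℤ → ℕ) (s : List (ℤ × Bool)) (k : ℕ) : Prop :=
  ∃ A B : List (ℤ × Bool), ∃ c : Bool, s = A ++ B ∧ A.length = k ∧ B.length = k ∧ 1 ≤ k ∧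
    (∀ a ∈ A, a.2 = c) ∧ (∀ a ∈ B, a.2 = !c) ∧
    A.map (fun a => σ a.1) = List.range k ∧ B.map (fun a => σ a.1) = List.range k

theorem find_some (σ : ℤ → ℕ) (R : List (List (ℤ × Bool))) :
    ∀ (b : Bool) (W : ℕ → Bool) (s : List (ℤ × Bool)), ROK b R →
    (∀ r1 ∈ R.head?, ∀ j < r1.length, W j = !b) → Val σ W R.flatten →
    findSoliton R = some s →
    ∃ u v : List (ℤ × Bool), ∃ k : ℕ, R.flatten = u ++ (s ++ v) ∧ SolShape σ s k ∧
      St σ W (u ++ s) = St σ W u ∧ (∀ z ∈ u.getLast?, k ≤ σ z.1) ∧ (u = [] → ∀ r1 ∈ R.head?, k = r1.length) := by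
  induction R with
  | nil => intro b W s _ _ _ h; simp [findSoliton] at h
  | cons r1 R ih =>
    intro b W s hR hW hV hf
    cases R with
    | nil => simp [findSoliton] at hf
    | cons r2 rest =>
      obtain ⟨n1, l1, n2, l2, hR'⟩ := hR
      simp only [List.head?_cons, Option.mem_def, Option.some.injEq, forall_eq'] at hW
      rw [List.flatten_cons, Val_append] at hV
      obtain ⟨V1, V2⟩ := hV
      have hr1 := blockLem σ b r1 l1 W 0 r1.length (by simp) (fun j _ hj => hW j hj) (by simp) V1
      have hpos : 1 ≤ r1.length := by
        have := List.length_pos_iff.2 n1; omega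
      rw [findSoliton] at hf
      split_ifs at hf with hlen
      · simp only [Option.some.injEq] at hf
        subst hf
        have V2' : Val σ (St σ W r1) (r2.take r1.length ++ (r2.drop r1.length ++ rest.flatten)) := by
          rw [← List.append_assoc, List.take_append_drop]; exact V2
        rw [Val_append] at V2'
        have hlt : (r2.take r1.length).length = r1.length := by simp [hlen]
        have hr2 := blockLem σ (!b) (r2.take r1.length) (fun a ha => l2 a (List.mem_of_mem_take ha))
          (St σ W r1) 0 r1.length (by simp)
          (fun j _ hj => by rw [hr1.2 j, if_pos (by omega)]; simp) (by omega) V2'.1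
        refine ⟨[], r2.drop r1.length ++ rest.flatten, r1.length, ?_, ?_, ?_, by simp, by simp⟩
        · rw [List.nil_append, List.append_assoc, ← List.append_assoc (r2.take _), List.take_append_drop]
          simp
        · refine ⟨r1, r2.take r1.length, b, rfl, rfl, hlt, hpos, l1,
            fun a ha => l2 a (List.mem_of_mem_take ha), ?_, ?_⟩
          · rw [hr1.1, List.range_eq_range']
          · rw [hr2.1, hlt, List.range_eq_range']
        · rw [List.nil_append, St_append]
          funext j
          rw [hr2.2 j, hr1.2 j, hlt]
          simp only [St, List.foldl_nil]
          split_ifs with h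
          · rw [hW j (by omega)]
          · rfl
      · obtain ⟨u, v, k, e1, e2, e3, e4, e5⟩ := ih (!b) (St σ W r1) s ⟨n2, l2, hR'⟩
          (by
            simp only [List.head?_cons, Option.mem_def, Option.some.injEq, forall_eq']
            intro j hj
            rw [hr1.2 j, if_pos (by omega)]; simp) V2 hf
        refine ⟨r1 ++ u, v, k, ?_, e2, ?_, ?_, ?_⟩
        · rw [List.flatten_cons, e1]; simp
        · rw [List.append_assoc, St_append, e3, St_append]
        · intro z hz
          cases hu : u with
          | nil =>
            rw [hu] at hz
            simp only [List.append_nil] at hz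
            have hk := e5 hu r2 (by simp)
            have h1 : (r1.map (fun a => σ a.1)).getLast? = some (σ z.1) := by
              rw [List.getLast?_map, hz]; rfl
            rw [hr1.1] at h1
            simp only [List.getLast?_range'] at h1
            split_ifs at h1
            simp at h1
            omega
          | cons d u' =>
            apply e4
            rw [List.getLast?_append] at hz
            rw [hu] at hz ⊢
            simpa using hz
        · intro h; simp at h; exact absurd h.1 n1

theorem find_none (σ : ℤ → ℕ) (R : List (List (ℤ × Bool))) :
    ∀ (b : Bool) (W : ℕ → Bool) (r1 : List (ℤ × Bool)) (rs : List (List (ℤ × Bool))),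
    R = r1 :: rs → ROK b R →
    (∀ j < r1.length, W j = !b) → (b = true ∨ ∃ j, r1.length ≤ j ∧ W j = true) →
    Val σ W R.flatten → findSoliton R = none → ∃ j, St σ W R.flatten j = true := by
  induction R with
  | nil => intro b W r1 rs h; simp at h
  | cons r R ih =>
    intro b W r1 rs hr hR hW hb hV hf
    obtain ⟨rfl, rfl⟩ := List.cons.inj hr
    obtain ⟨n1, l1, hR'⟩ := hR
    rw [List.flatten_cons, Val_append] at hV
    obtain ⟨V1, V2⟩ := hV
    have hr1 := blockLem σ b r l1 W 0 r.length (by simp) (fun j _ hj => hW j hj) (by simp) V1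
    have hpos : 1 ≤ r.length := by
      have := List.length_pos_iff.2 n1; omega
    rw [List.flatten_cons, St_append]
    cases R with
    | nil =>
      simp only [List.flatten_nil]
      rcases hb with rfl | ⟨j, hj, hj'⟩
      · exact ⟨0, by simp only [St, List.foldl_nil]; exact (hr1.2 0).trans (if_pos (by omega))⟩
      · exact ⟨j, by simp only [St, List.foldl_nil]; exact ((hr1.2 j).trans (if_neg (by omega))).trans hj'⟩
    | cons r2 rest =>
      rw [findSoliton] at hf
      split_ifs at hf with hlen
      refine ih (!b) (St σ W r) r2 rest rfl hR' ?_ ?_ V2 hf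
      · intro j hj
        rw [hr1.2 j, if_pos (by omega)]; simp
      · cases b
        · left; rfl
        · right; exact ⟨r.length - 1, by omega, by rw [hr1.2, if_pos (by omega)]⟩


structure TSP (σ : ℤ → ℕ) (w : List (ℤ × Bool)) (S : List (List (ℤ × Bool))) : Prop where
  cover : ∀ a ∈ w, ∃ s ∈ S, a ∈ s
  sub : ∀ s ∈ S, s.Sublist w
  shape : ∀ s ∈ S, ∃ k, SolShape σ s k
  disj : ∀ s ∈ S, ∀ s' ∈ S, ∀ a, a ∈ s → a ∈ s' → s = s'
  gap : ∀ s ∈ S, ∀ x ∈ s, ∀ y ∈ s, x.2 = y.2 → σ y.1 = σ x.1 + 1 → ∀ z ∈ w,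
    x.1 < z.1 → z.1 < y.1 → σ z.1 < σ x.1
  hull : ∀ s ∈ S, ∀ x ∈ s, ∀ y ∈ s, ∀ z ∈ w, x.1 ≤ z.1 → z.1 ≤ y.1 → 2 * σ z.1 < s.length

theorem SolShape.len {σ : ℤ → ℕ} {s : List (ℤ × Bool)} {k : ℕ} (h : SolShape σ s k) :
    s.length = 2 * k := by
  obtain ⟨A, B, c, rfl, h1, h2, _⟩ := h
  simp [h1, h2]; omega

theorem SolShape.lt {σ : ℤ → ℕ} {s : List (ℤ × Bool)} {k : ℕ} (h : SolShape σ s k) :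
    ∀ a ∈ s, σ a.1 < k := by
  obtain ⟨A, B, c, rfl, h1, h2, _, _, _, hA, hB⟩ := h
  intro a ha
  rcases List.mem_append.1 ha with ha | ha
  · have := List.mem_map_of_mem (f := fun a : ℤ × Bool => σ a.1) ha
    rw [hA] at this; simpa using this
  · have := List.mem_map_of_mem (f := fun a : ℤ × Bool => σ a.1) ha
    rw [hB] at this; simpa using this

/-- Sortedness of positions agrees with sortedness of labels on a run. -/
theorem blockMono (σ : ℤ → ℕ) (A : List (ℤ × Bool)) (k : ℕ) (hs : A.Pairwise (fun a b => a.1 < b.1))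
    (hA : A.map (fun a => σ a.1) = List.range k) :
    ∀ x ∈ A, ∀ y ∈ A, x.1 < y.1 ↔ σ x.1 < σ y.1 := by
  have h1 : A.Pairwise (fun a b => σ a.1 < σ b.1) := by
    have : (A.map (fun a => σ a.1)).Pairwise (· < ·) := by rw [hA]; exact List.pairwise_lt_range
    rwa [List.pairwise_map] at this
  have h2 : A.Pairwise (fun a b => (a.1 < b.1 ↔ σ a.1 < σ b.1) ∧ (b.1 < a.1 ↔ σ b.1 < σ a.1)) := by
    refine (hs.and h1).imp ?_
    rintro a b ⟨h, h'⟩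
    constructor <;> constructor <;> intro <;> omega
  intro x hx y hy
  haveI : Std.Symm (fun a b : ℤ × Bool =>
      (a.1 < b.1 ↔ σ a.1 < σ b.1) ∧ (b.1 < a.1 ↔ σ b.1 < σ a.1)) := ⟨fun a b h => ⟨h.2, h.1⟩⟩
  have := List.Pairwise.forall_of_forall
    (R := fun a b : ℤ × Bool => (a.1 < b.1 ↔ σ a.1 < σ b.1) ∧ (b.1 < a.1 ↔ σ b.1 < σ a.1))
    (fun a _ => by simp) h2 hx hy
  exact this.1

theorem SolShape.mono {σ : ℤ → ℕ} {s : List (ℤ × Bool)} {k : ℕ} (h : SolShape σ s k)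
    (hs : s.Pairwise (fun a b => a.1 < b.1)) :
    ∀ x ∈ s, ∀ y ∈ s, x.2 = y.2 → (x.1 < y.1 ↔ σ x.1 < σ y.1) := by
  obtain ⟨A, B, c, rfl, h1, h2, _, lA, lB, hA, hB⟩ := h
  rw [List.pairwise_append] at hs
  intro x hx y hy hxy
  rcases List.mem_append.1 hx with hx | hx <;> rcases List.mem_append.1 hy with hy | hy
  · exact blockMono σ A k hs.1 hA x hx y hy
  · rw [lA x hx, lB y hy] at hxy; simp at hxy
  · rw [lB x hx, lA y hy] at hxy; simp at hxy
  · exact blockMono σ B k hs.2.1 hB x hx y hy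

theorem SolShape.nobetween {σ : ℤ → ℕ} {s : List (ℤ × Bool)} {k : ℕ} (h : SolShape σ s k)
    (hs : s.Pairwise (fun a b => a.1 < b.1)) :
    ∀ x ∈ s, ∀ y ∈ s, ∀ z ∈ s, x.2 = y.2 → σ y.1 = σ x.1 + 1 → x.1 < z.1 → z.1 < y.1 → False := by
  have hm := h.mono hs
  obtain ⟨A, B, c, rfl, h1, h2, _, lA, lB, hA, hB⟩ := h
  rw [List.pairwise_append] at hs
  intro x hx y hy z hz hxy hσ h3 h4
  by_cases hzx : x.2 = z.2
  · have := (hm x hx z hz hzx).1 h3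
    have := (hm z hz y hy (hzx.symm.trans hxy)).1 h4
    omega
  · rcases List.mem_append.1 hx with hx | hx <;> rcases List.mem_append.1 hz with hz | hz
    · rw [lA x hx, lA z hz] at hzx; simp at hzx
    · rcases List.mem_append.1 hy with hy | hy
      · have := hs.2.2 y hy z hz; omega
      · rw [lA x hx, lB y hy] at hxy; simp at hxy
    · have := hs.2.2 z hz x hx; omega
    · rw [lB x hx, lB z hz] at hzx; simp at hzx

theorem ts_main (σ : ℤ → ℕ) : ∀ (fuel : ℕ) (w : List (ℤ × Bool)),
    w.Pairwise (fun a b => a.1 < b.1) → Val σ (fun _ => false) w →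
    (∀ j, St σ (fun _ => false) w j = false) → w.length ≤ fuel → TSP σ w (tsAux fuel w) := by
  intro fuel
  induction fuel with
  | zero =>
    intro w _ _ _ h
    have : w = [] := by simpa using h
    subst this
    constructor <;> simp [tsAux]
  | succ fuel ih =>
    intro w hs hV hE hlen
    cases w with
    | nil =>
      simp only [tsAux, runsOf, findSoliton]
      constructor <;> simp
    | cons a0 w0 =>
      obtain ⟨f1, f2, f3⟩ := runsOf_ok a0 w0
      obtain ⟨r1, rs, hrr⟩ := List.exists_cons_of_ne_nil f3
      have ha0 : a0.2 = true := by
        have := hV.1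
        simpa using this.symm
      have hW : ∀ j < r1.length, (fun _ : ℕ => false) j = !a0.2 := by simp [ha0]
      cases hf : findSoliton (runsOf (a0 :: w0)) with
      | none =>
        exfalso
        obtain ⟨j, hj⟩ := find_none σ (runsOf (a0 :: w0)) a0.2 (fun _ => false) r1 rs hrr f2 hW
          (Or.inl ha0) (by rw [f1]; exact hV) hf
        rw [f1, hE j] at hj
        simp at hj
      | some s =>
        obtain ⟨u, v, k, e1, e2, e3, e4, -⟩ := find_some σ (runsOf (a0 :: w0)) a0.2 (fun _ => false) s f2
          (by rw [hrr]; simpa using fun j _ => by simp [ha0]) (by rw [f1]; exact hV) hf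
        rw [f1] at e1
        rw [tsAux, hf]
        simp only
        have hk := e2.len
        have hσs := e2.lt
        have hk1 : 1 ≤ k := by obtain ⟨A, B, c, _, _, _, h, _⟩ := e2; exact h
        clear hW hrr f1 f2 f3 hf ha0
        revert e1 hs hV hE hlen
        generalize a0 :: w0 = w
        rintro hs hV hE hlen rfl
        have hs' := hs
        rw [List.pairwise_append] at hs'
        obtain ⟨su, ssv, hu_sv⟩ := hs'
        rw [List.pairwise_append] at ssv
        obtain ⟨ss, sv, hsv⟩ := ssv
        have hus : ∀ a ∈ u, ∀ b ∈ s, a.1 < b.1 := fun a ha b hb => hu_sv a ha b (by simp [hb])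
        have huv : ∀ a ∈ u, ∀ b ∈ v, a.1 < b.1 := fun a ha b hb => hu_sv a ha b (by simp [hb])
        have hfil : (u ++ (s ++ v)).filter (fun a => !((s.map Prod.fst).contains a.1)) = u ++ v := by
          rw [List.filter_append, List.filter_append]
          have h1 : u.filter (fun a => !((s.map Prod.fst).contains a.1)) = u := by
            rw [List.filter_eq_self]
            intro a ha
            simp only [List.contains_eq_mem, Bool.not_eq_true', decide_eq_false_iff_not, List.mem_map,
              not_exists, not_and]
            intro b hb h
            have := hus a ha b hb; omega
          have h2 : v.filter (fun a => !((s.map Prod.fst).contains a.1)) = v := by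
            rw [List.filter_eq_self]
            intro a ha
            simp only [List.contains_eq_mem, Bool.not_eq_true', decide_eq_false_iff_not, List.mem_map,
              not_exists, not_and]
            intro b hb h
            have := hsv b hb a ha; omega
          have h3 : s.filter (fun a => !((s.map Prod.fst).contains a.1)) = [] := by
            rw [List.filter_eq_nil_iff]
            intro a ha
            simp only [List.contains_eq_mem, Bool.not_eq_true', decide_eq_false_iff_not, List.mem_map,
              not_exists, not_and]
            intro h
            exact h a ha rfl
          rw [h1, h2, h3, List.nil_append]
        rw [hfil]
        have hsub : (u ++ v).Sublist (u ++ (s ++ v)) :=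
          List.Sublist.append (List.Sublist.refl u) (List.sublist_append_right s v)
        rw [← List.append_assoc, Val_append, e3, Val_append] at hV
        rw [← List.append_assoc, St_append, e3, ← St_append] at hE
        have IH := ih (u ++ v) (hs.sublist hsub) ((Val_append _ _ _ _).2 ⟨hV.1.1, hV.2⟩) hE
          (by simp only [List.length_append] at hlen ⊢; omega)
        generalize tsAux fuel (u ++ v) = S at IH ⊢
        have hnot : ∀ s' ∈ S, ∀ a ∈ s', a ∉ s := by
          intro s' hs' a ha ha'
          have : a ∈ u ++ v := (IH.sub s' hs').subset ha
          rcases List.mem_append.1 this with h | h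
          · exact absurd (hus a h a ha') (lt_irrefl _)
          · exact absurd (hsv a ha' a h) (lt_irrefl _)
        have key : ∀ x ∈ u ++ v, ∀ y ∈ u ++ v, ∀ z ∈ s, x.1 ≤ z.1 → z.1 ≤ y.1 →
            ∃ l ∈ u ++ v, x.1 ≤ l.1 ∧ l.1 < z.1 ∧ k ≤ σ l.1 ∧ (x.1 = l.1 → x = l) ∧ l.1 < y.1 := by
          intro x hx y hy z hz hxz hzy
          have hxu : x ∈ u := by
            rcases List.mem_append.1 hx with h | h
            · exact h
            · have := hsv z hz x h; omega
          have hune : u ≠ [] := List.ne_nil_of_mem hxu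
          have hl : u.getLast hune ∈ u := List.getLast_mem hune
          have hlx : x.1 ≤ (u.getLast hune).1 ∧ (x.1 = (u.getLast hune).1 → x = u.getLast hune) := by
            have h1 : x ∈ u.dropLast ++ [u.getLast hune] := by
              rw [List.dropLast_append_getLast hune]; exact hxu
            rcases List.mem_append.1 h1 with h | h
            · have h2 := su
              rw [← List.dropLast_append_getLast hune, List.pairwise_append] at h2
              have := h2.2.2 x h (u.getLast hune) (by simp)
              constructor
              · omega
              · intro; omega
            · rw [List.mem_singleton] at h
              rw [← h]; simp
          have := hus _ hl z hz
          refine ⟨u.getLast hune, by simp, hlx.1, this, ?_, hlx.2, by omega⟩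
          apply e4
          rw [List.getLast?_eq_some_getLast hune]; rfl
        constructor
        · intro a ha
          rw [List.mem_append, List.mem_append] at ha
          by_cases has : a ∈ s
          · exact ⟨s, by simp, has⟩
          · obtain ⟨s', h1, h2⟩ := IH.cover a (by rw [List.mem_append]; tauto)
            exact ⟨s', by simp [h1], h2⟩
        · intro s' hs'
          rcases List.mem_cons.1 hs' with rfl | h
          · exact (List.sublist_append_left _ _).trans (List.sublist_append_right _ _)
          · exact (IH.sub s' h).trans hsub
        · intro s' hs'
          rcases List.mem_cons.1 hs' with rfl | h
          · exact ⟨k, e2⟩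
          · exact IH.shape s' h
        · intro s1 h1 s2 h2 a ha1 ha2
          rcases List.mem_cons.1 h1 with h1 | h1 <;> rcases List.mem_cons.1 h2 with h2 | h2
          · rw [h1, h2]
          · exact absurd (h1 ▸ ha1) (hnot s2 h2 a ha2)
          · exact absurd (h2 ▸ ha2) (hnot s1 h1 a ha1)
          · exact IH.disj s1 h1 s2 h2 a ha1 ha2
        · intro s' hs' x hx y hy hxy hσ z hz hxz hzy
          rcases List.mem_cons.1 hs' with rfl | h
          · exfalso
            rw [List.mem_append, List.mem_append] at hz
            rcases hz with h | h | h
            · have := hus z h x hx; omega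
            · exact e2.nobetween ss x hx y hy z h hxy hσ hxz hzy
            · have := hsv y hy z h; omega
          · by_cases hzs : z ∈ s
            · have hx' := (IH.sub s' h).subset hx
              obtain ⟨l, hl, h1, h2, h3, h4, h5⟩ := key x hx' y
                ((IH.sub s' h).subset hy) z hzs hxz.le hzy.le
              have hz' := hσs z hzs
              rcases h1.lt_or_eq with hlt | heq
              · have h6 := IH.gap s' h x hx y hy hxy hσ l hl hlt h5
                omega
              · rw [← heq] at h3; omega
            · exact IH.gap s' h x hx y hy hxy hσ z (by
                rw [List.mem_append, List.mem_append] at hz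
                rw [List.mem_append]; tauto) hxz hzy
        · intro s' hs' x hx y hy z hz hxz hzy
          rcases List.mem_cons.1 hs' with rfl | h
          · have : z ∈ s' := by
              rw [List.mem_append, List.mem_append] at hz
              rcases hz with h | h | h
              · have := hus z h x hx; omega
              · exact h
              · have := hsv y hy z h; omega
            have := hσs z this
            omega
          · by_cases hzs : z ∈ s
            · obtain ⟨l, hl, h1, h2, h3, h4, h5⟩ := key x ((IH.sub s' h).subset hx) y
                ((IH.sub s' h).subset hy) z hzs hxz hzy
              have := IH.hull s' h x hx y hy l hl h1 (by omega)
              have := hσs z hzs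
              omega
            · exact IH.hull s' h x hx y hy z (by
                rw [List.mem_append, List.mem_append] at hz
                rw [List.mem_append]; tauto) hxz hzy


/-! ### Part 2: walks -/

structure Good (η : Cfg) (ξ : ℤ → ℤ) : Prop where
  lift : IsLift η ξ
  right : ∀ C : ℤ, ∃ N : ℤ, ∀ x ≥ N, ξ x ≤ C
  left : ∃ c : ℝ, 0 < c ∧ ∀ ε > 0, ∃ N : ℤ, N < 0 ∧ ∀ x ≤ N,
    (c - ε) * (-(x : ℝ)) ≤ ξ x ∧ (ξ x : ℝ) ≤ (c + ε) * (-(x : ℝ))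

theorem valZ_cast (b : Bool) : ((valZ b : ℤ) : ℝ) = valR b := by cases b <;> simp [valZ, valR]

theorem lift_sum {η : Cfg} {ξ : ℤ → ℤ} (h : IsLift η ξ) (z x : ℤ) (hzx : z ≤ x + 1) :
    ∑ y ∈ Finset.Icc z x, (2 * valZ (η y) - 1) = ξ x - ξ (z - 1) := by
  obtain ⟨n, hn⟩ := Int.le.dest hzx
  induction n generalizing x with
  | zero =>
    have : x = z - 1 := by simp at hn; omega
    subst this
    rw [Finset.Icc_eq_empty (by omega)]; simp
  | succ n ih =>
    have h1 : z ≤ x := by push_cast at hn; omega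
    have h2 : Finset.Icc z x = insert x (Finset.Icc z (x - 1)) := by
      ext y; simp only [Finset.mem_Icc, Finset.mem_insert]; omega
    rw [h2, Finset.sum_insert (by simp), ih (x - 1) (by omega) (by push_cast at hn; omega), ← h x]
    ring

theorem isRecord_iff {η : Cfg} {ξ : ℤ → ℤ} (h : IsLift η ξ) (x : ℤ) :
    isRecord η x ↔ ∀ y < x, ξ x < ξ y := by
  unfold isRecord
  have key : ∀ z ≤ x, ((∑ y ∈ Finset.Icc z x, valZ (η y)) < ∑ y ∈ Finset.Icc z x, (1 - valZ (η y))) ↔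
      ξ x < ξ (z - 1) := by
    intro z hz
    have h1 := lift_sum h z x (by omega)
    have h2 : ∑ y ∈ Finset.Icc z x, (2 * valZ (η y) - 1) =
      (∑ y ∈ Finset.Icc z x, valZ (η y)) - ∑ y ∈ Finset.Icc z x, (1 - valZ (η y)) := by
      rw [← Finset.sum_sub_distrib]
      exact Finset.sum_congr rfl (fun y _ => by ring)
    omega
  constructor
  · intro h1 y hy
    have := (key (y + 1) (by omega)).1 (h1 (y + 1) (by omega))
    simpa using this
  · intro h1 z hz
    exact (key z hz).2 (h1 _ (by omega))

theorem step_true {η : Cfg} {ξ : ℤ → ℤ} (h : IsLift η ξ) {x : ℤ} (hx : η x = true) :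
    ξ x = ξ (x - 1) + 1 := by
  have := h x
  simp [hx, valZ] at this; omega

theorem step_false {η : Cfg} {ξ : ℤ → ℤ} (h : IsLift η ξ) {x : ℤ} (hx : η x = false) :
    ξ x = ξ (x - 1) - 1 := by
  have := h x
  simp [hx, valZ] at this; omega

namespace Good
variable {η : Cfg} {ξ : ℤ → ℤ}

theorem tends (h : Good η ξ) (C : ℤ) : ∃ N : ℤ, ∀ x ≤ N, C ≤ ξ x := by
  obtain ⟨c, hc, h1⟩ := h.left
  obtain ⟨N, hN, h2⟩ := h1 (c / 2) (by positivity)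
  obtain ⟨n, hn⟩ := exists_nat_gt ((C : ℝ) / (c / 2))
  refine ⟨min N (-n), fun x hx => ?_⟩
  have h3 := (h2 x (by omega)).1
  have h4 : (n : ℝ) ≤ -(x : ℝ) := by
    have : (n : ℤ) ≤ -x := by omega
    exact_mod_cast this
  rw [div_lt_iff₀ (by positivity)] at hn
  have : (C : ℝ) ≤ ξ x := by nlinarith
  exact_mod_cast this

theorem lb (h : Good η ξ) (x : ℤ) : ∃ B : ℤ, ∀ y ≤ x, B ≤ ξ y := by
  obtain ⟨N, hN⟩ := h.tends 0
  obtain ⟨B, hB⟩ := ((Finset.Icc N x).image ξ).bddBelow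
  refine ⟨min B 0, fun y hy => ?_⟩
  by_cases hyN : y ≤ N
  · have := hN y hyN; omega
  · have : B ≤ ξ y := hB (by simp only [Finset.coe_image, Set.mem_image, Finset.mem_coe, Finset.mem_Icc]; exact ⟨y, ⟨by omega, hy⟩, rfl⟩)
    omega

theorem bdd (h : Good η ξ) (x : ℤ) : BddBelow (ξ '' Set.Iic x) := by
  obtain ⟨B, hB⟩ := h.lb x
  exact ⟨B, by rintro _ ⟨y, hy, rfl⟩; exact hB y hy⟩

theorem runMin_le (h : Good η ξ) {x y : ℤ} (hy : y ≤ x) : runMin ξ x ≤ ξ y :=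
  csInf_le (h.bdd x) ⟨y, hy, rfl⟩

theorem runMin_mem (h : Good η ξ) (x : ℤ) : ∃ y ≤ x, ξ y = runMin ξ x := by
  obtain ⟨y, hy, h1⟩ := Int.csInf_mem (s := ξ '' Set.Iic x) ⟨ξ x, x, le_refl x, rfl⟩ (h.bdd x)
  exact ⟨y, hy, h1⟩

theorem runMin_step (h : Good η ξ) (x : ℤ) : runMin ξ x = min (runMin ξ (x - 1)) (ξ x) := by
  apply le_antisymm
  · apply le_min
    · obtain ⟨y, hy, h1⟩ := h.runMin_mem (x - 1)
      rw [← h1]; exact h.runMin_le (by omega)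
    · exact h.runMin_le le_rfl
  · obtain ⟨y, hy, h1⟩ := h.runMin_mem x
    rw [← h1]
    by_cases hyx : y = x
    · subst hyx; exact min_le_right _ _
    · exact (min_le_left _ _).trans (h.runMin_le (by omega))

theorem rec_iff (h : Good η ξ) (x : ℤ) : isRecord η x ↔ ξ x < runMin ξ (x - 1) := by
  rw [isRecord_iff h.lift]
  constructor
  · intro h1
    obtain ⟨y, hy, h2⟩ := h.runMin_mem (x - 1)
    rw [← h2]; exact h1 y (by omega)
  · intro h1 y hy
    have := h.runMin_le (x := x - 1) (y := y) (by omega)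
    omega

theorem rec_false (h : Good η ξ) {x : ℤ} (hx : isRecord η x) : η x = false := by
  rw [isRecord_iff h.lift] at hx
  have := hx (x - 1) (by omega)
  cases hh : η x
  · rfl
  · have := step_true h.lift hh; omega

/-- at a record: the walk at the previous site is at its running minimum. -/
theorem rec_iff' (h : Good η ξ) (x : ℤ) :
    isRecord η x ↔ η x = false ∧ ξ (x - 1) = runMin ξ (x - 1) := by
  have h1 := h.runMin_le (x := x - 1) (y := x - 1) le_rfl
  constructor
  · intro hx
    have h2 := h.rec_false hx
    refine ⟨h2, ?_⟩
    have := step_false h.lift h2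
    have := (h.rec_iff x).1 hx
    omega
  · rintro ⟨h2, h3⟩
    have := step_false h.lift h2
    rw [h.rec_iff x]; omega

/-- first passage times -/
theorem first_passage (h : Good η ξ) (c : ℤ) :
    ∃ x, ξ x = c ∧ isRecord η x ∧ ∀ y < x, c < ξ y := by
  obtain ⟨N, hN⟩ := h.right c
  obtain ⟨M, hM⟩ := h.tends (c + 1)
  have hbd : ∀ z : ℤ, ξ z ≤ c → M ≤ z := by
    intro z hz
    by_contra hlt
    have := hM z (by omega); omega
  obtain ⟨x, hx, hmin⟩ := Int.exists_least_of_bdd (P := fun z => ξ z ≤ c) ⟨M, hbd⟩ ⟨N, hN N le_rfl⟩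
  have hlt : ∀ y < x, c < ξ y := by
    intro y hy
    by_contra hh
    have := hmin y (by omega); omega
  have hxc : ξ x = c := by
    have h1 := hlt (x - 1) (by omega)
    cases hh : η x
    · have := step_false h.lift hh; omega
    · have := step_true h.lift hh; omega
  refine ⟨x, hxc, ?_, hlt⟩
  rw [isRecord_iff h.lift]
  intro y hy; rw [hxc]; exact hlt y hy

theorem recPos_spec (h : Good η ξ) (j : ℤ) :
    ξ (recPos ξ j) = -j ∧ isRecord η (recPos ξ j) ∧ ∀ y < recPos ξ j, -j < ξ y := by
  obtain ⟨x, h1, h2, h3⟩ := h.first_passage (-j)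
  have : recPos ξ j = x := by
    apply le_antisymm
    · apply csInf_le
      · refine ⟨x, ?_⟩
        intro y hy
        by_contra hlt
        have := h3 y (by omega)
        have hy' : ξ y = -j := hy
        omega
      · exact h1
    · apply le_csInf ⟨x, h1⟩
      intro y hy
      by_contra hlt
      have := h3 y (by omega)
      have hy' : ξ y = -j := hy
      omega
  rw [this]; exact ⟨h1, h2, h3⟩

theorem rec_left (h : Good η ξ) (a : ℤ) : ∃ x ≤ a, isRecord η x := by
  obtain ⟨x, h1, h2, h3⟩ := h.first_passage (ξ a)
  refine ⟨x, ?_, h2⟩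
  by_contra hlt
  have := h3 a (by omega); omega

theorem rec_right (h : Good η ξ) (a : ℤ) : ∃ x, a ≤ x ∧ isRecord η x := by
  obtain ⟨B, hB⟩ := h.lb a
  obtain ⟨x, h1, h2, h3⟩ := h.first_passage (B - 1)
  refine ⟨x, ?_, h2⟩
  by_contra hlt
  have := hB x (by omega); omega

theorem liftT_le (h : Good η ξ) (x : ℤ) : liftT ξ x ≤ ξ x := by
  have := h.runMin_le (x := x) (y := x) le_rfl
  simp only [liftT]; omega

theorem next (h : Good η ξ) : Good (bbsT η) (liftT ξ) := by
  refine ⟨?_, ?_, ?_⟩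
  · intro x
    have h0 := h.runMin_le (x := x - 1) (y := x - 1) le_rfl
    have h1 := h.runMin_step x
    have h2 := h.rec_iff' x
    simp only [liftT, bbsT]
    cases hh : η x
    · have h3 := step_false h.lift hh
      by_cases hr : isRecord η x
      · have := (h2.1 hr).2
        simp only [hr, if_true, valZ]
        simp only [Bool.false_eq_true, if_false]
        omega
      · have : ξ (x - 1) ≠ runMin ξ (x - 1) := fun h4 => hr (h2.2 ⟨hh, h4⟩)
        simp only [hr, if_false, valZ, Bool.not_false, if_true]
        omega
    · have h3 := step_true h.lift hh
      have hr : ¬ isRecord η x := fun h4 => by have := (h2.1 h4).1; rw [hh] at this; simp at this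
      simp only [hr, if_false, valZ, Bool.not_true, Bool.false_eq_true]
      omega
  · intro C
    obtain ⟨N, hN⟩ := h.right C
    exact ⟨N, fun x hx => (h.liftT_le x).trans (hN x hx)⟩
  · obtain ⟨c, hc, h1⟩ := h.left
    refine ⟨c, hc, fun ε hε => ?_⟩
    obtain ⟨N, hN, h2⟩ := h1 (min (ε / 3) (c / 2)) (by positivity)
    refine ⟨N, hN, fun x hx => ?_⟩
    obtain ⟨y, hy, hy'⟩ := h.runMin_mem x
    have hx2 := h2 x hx
    have hy2 := h2 y (by omega)
    have hle : (liftT ξ x : ℝ) ≤ ξ x := by exact_mod_cast h.liftT_le x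
    have heq : (liftT ξ x : ℝ) = 2 * ξ y - ξ x := by
      simp only [liftT]; rw [hy']; push_cast; ring
    have m1 : min (ε / 3) (c / 2) ≤ ε / 3 := min_le_left _ _
    have m2 : min (ε / 3) (c / 2) ≤ c / 2 := min_le_right _ _
    have m0 : 0 < min (ε / 3) (c / 2) := by positivity
    generalize min (ε / 3) (c / 2) = δ at *
    have hx0 : (0:ℝ) < -(x:ℝ) := by
      have : 0 < -x := by omega
      exact_mod_cast this
    have hyx : -(x:ℝ) ≤ -(y:ℝ) := by
      have : -x ≤ -y := by omega
      exact_mod_cast this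
    have : (c - δ) * (-(x:ℝ)) ≤ (c - δ) * (-(y:ℝ)) :=
      mul_le_mul_of_nonneg_left hyx (by linarith)
    constructor
    · nlinarith
    · nlinarith

theorem iter (h : Good η ξ) (t : ℕ) : Good (bbsT^[t] η) (liftT^[t] ξ) := by
  induction t with
  | zero => exact h
  | succ t ih =>
    rw [Function.iterate_succ_apply', Function.iterate_succ_apply']
    exact ih.next

end Good

theorem good_of_inX {η : Cfg} {ξ : ℤ → ℤ} (hη : inX η) (hl : IsLift η ξ) : Good η ξ := by
  obtain ⟨lam, h0, h1, hL, hR⟩ := hη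
  refine ⟨hl, ?_, ?_⟩
  · intro C
    rw [Metric.tendsto_atTop] at hR
    obtain ⟨N, hN⟩ := hR ((1 / 2 - lam) / 2) (by linarith)
    have hd : 0 < 1 / 2 - lam := by linarith
    obtain ⟨n, hn⟩ := exists_nat_gt (((ξ (-1) : ℝ) - C) / (1 / 2 - lam))
    refine ⟨max (max N 1) n, fun x hx => ?_⟩
    obtain ⟨y, rfl⟩ := Int.eq_ofNat_of_zero_le (show 0 ≤ x by omega)
    have h3 := hN y (by omega)
    rw [Real.dist_eq, abs_lt] at h3
    have hy0 : (1:ℝ) ≤ y := by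
      have : 1 ≤ y := by omega
      exact_mod_cast this
    have hyn : (n:ℝ) ≤ y := by
      have : n ≤ y := by omega
      exact_mod_cast this
    have h4 := lift_sum hl 0 y (by omega)
    have h5 : (ξ y : ℝ) - ξ (-1) = 2 * (∑ x ∈ Finset.Icc (0 : ℤ) (y : ℤ), valR (η x)) - (y + 1) := by
      have h6 := congrArg (fun z : ℤ => (z : ℝ)) h4
      simp only [Int.cast_sum, Int.cast_sub, Int.cast_mul, valZ_cast] at h6
      rw [show (0:ℤ) - 1 = -1 by norm_num] at h6
      rw [← h6, Finset.sum_sub_distrib, Finset.mul_sum]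
      simp
    generalize ∑ x ∈ Finset.Icc (0 : ℤ) (y : ℤ), valR (η x) = S at *
    have h7 : S / y < lam + (1 / 2 - lam) / 2 := by linarith [h3.2]
    rw [div_lt_iff₀ (by linarith)] at h7
    rw [div_lt_iff₀ hd] at hn
    have : (ξ y : ℝ) ≤ C := by nlinarith
    exact_mod_cast this
  · refine ⟨1 - 2 * lam, by linarith, fun ε hε => ?_⟩
    rw [Metric.tendsto_atTop] at hL
    obtain ⟨N, hN⟩ := hL (ε / 4) (by linarith)
    obtain ⟨n, hn⟩ := exists_nat_gt ((|(ξ 0 : ℝ)| + 2) / (ε / 2))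
    refine ⟨-(N + n + 2), by omega, fun x hx => ?_⟩
    obtain ⟨y, hy⟩ := Int.eq_ofNat_of_zero_le (show 0 ≤ -x - 1 by omega)
    have hx' : x = -(y:ℤ) - 1 := by omega
    subst hx'
    have h3 := hN y (by omega)
    rw [Real.dist_eq, abs_lt] at h3
    have hy0 : (1:ℝ) ≤ y := by
      have : 1 ≤ y := by omega
      exact_mod_cast this
    have hyn : (n:ℝ) ≤ y := by
      have : n ≤ y := by omega
      exact_mod_cast this
    have h4 := lift_sum hl (-(y:ℤ)) 0 (by omega)
    have h5 : (ξ 0 : ℝ) - ξ (-(y:ℤ) - 1) = 2 * (∑ x ∈ Finset.Icc (-(y : ℤ)) 0, valR (η x)) - (y + 1) := by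
      have h6 := congrArg (fun z : ℤ => (z : ℝ)) h4
      simp only [Int.cast_sum, Int.cast_sub, Int.cast_mul, valZ_cast] at h6
      rw [← h6, Finset.sum_sub_distrib, Finset.mul_sum]
      simp
      have : (1 + (y:ℤ)).toNat = 1 + y := by omega
      rw [this]; push_cast; ring
    generalize ∑ x ∈ Finset.Icc (-(y : ℤ)) 0, valR (η x) = S at *
    have hc : ((-(y:ℤ) - 1 : ℤ) : ℝ) = -y - 1 := by push_cast; ring
    rw [hc]
    generalize hz : (ξ (-(y:ℤ) - 1) : ℝ) = Z at *
    have h7 : S / y < lam + ε / 4 := by linarith [h3.2]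
    have h8 : lam - ε / 4 < S / y := by linarith [h3.1]
    rw [div_lt_iff₀ (by linarith)] at h7
    rw [lt_div_iff₀ (by linarith)] at h8
    rw [div_lt_iff₀ (by linarith)] at hn
    have a1 := le_abs_self (ξ 0 : ℝ)
    have a2 := neg_abs_le (ξ 0 : ℝ)
    have : (n:ℝ) * (ε / 2) ≤ y * (ε / 2) := by gcongr
    constructor <;> nlinarith


/-! ### Part 3: the carrier with numbered seats -/

/-- Seat used when letter `b` meets the carrier state `A`. -/
noncomputable def seat (b : Bool) (A : Finset ℕ) : ℕ := sInf {j | decide (j ∈ A) = !b}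

noncomputable def stp (b : Bool) (A : Finset ℕ) : Finset ℕ :=
  if b then insert (seat b A) A else A.erase (seat b A)

noncomputable def cF (η : Cfg) (a : ℤ) : ℕ → Finset ℕ
  | 0 => ∅
  | n + 1 => stp (η (a + n + 1)) (cF η a n)

theorem seat_true (A : Finset ℕ) : seat true A ∉ A ∧ ∀ j < seat true A, j ∈ A := by
  have hne : {j | decide (j ∈ A) = !true}.Nonempty := by
    obtain ⟨j, hj⟩ := Infinite.exists_notMem_finset A
    exact ⟨j, by simpa using hj⟩
  constructor
  · have := Nat.sInf_mem hne
    simpa [seat] using this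
  · intro j hj
    have := Nat.notMem_of_lt_sInf hj
    simpa using this

theorem seat_false {A : Finset ℕ} (hA : A.Nonempty) :
    seat false A ∈ A ∧ ∀ j < seat false A, j ∉ A := by
  have hne : {j | decide (j ∈ A) = !false}.Nonempty := by
    obtain ⟨j, hj⟩ := hA
    exact ⟨j, by simpa using hj⟩
  constructor
  · have := Nat.sInf_mem hne
    simpa [seat] using this
  · intro j hj
    have := Nat.notMem_of_lt_sInf hj
    simpa using this

theorem cF_card {η : Cfg} {ξ : ℤ → ℤ} (h : Good η ξ) {a : ℤ} (ha : isRecord η a) (n : ℕ) :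
    ((cF η a n).card : ℤ) = ξ (a + n) - runMin ξ (a + n) := by
  induction n with
  | zero =>
    have h1 := h.runMin_step a
    have h2 := (h.rec_iff a).1 ha
    simp only [cF, Finset.card_empty, Nat.cast_zero, add_zero]
    omega
  | succ n ih =>
    have e : a + ((n + 1 : ℕ) : ℤ) = a + n + 1 := by push_cast; ring
    rw [e, cF]
    have h1 := h.runMin_step (a + n + 1)
    have e2 : a + (n:ℤ) + 1 - 1 = a + n := by ring
    rw [e2] at h1
    have h4 := h.runMin_le (x := a + n) (y := a + n) le_rfl
    cases hh : η (a + n + 1)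
    · have h3 := step_false h.lift hh
      rw [e2] at h3
      simp only [stp, Bool.false_eq_true, if_false]
      by_cases hA : (cF η a n).Nonempty
      · have h5 := Finset.card_erase_of_mem (seat_false hA).1
        have := hA.card_pos
        omega
      · rw [Finset.not_nonempty_iff_eq_empty] at hA
        rw [hA] at ih ⊢
        simp at ih ⊢
        omega
    · have h3 := step_true h.lift hh
      rw [e2] at h3
      simp only [stp, if_true]
      rw [Finset.card_insert_of_notMem (seat_true _).1]
      push_cast
      omega

theorem cF_indep {η : Cfg} {ξ : ℤ → ℤ} (h : Good η ξ) {a : ℤ} (ha : isRecord η a) (m : ℕ)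
    (hb : isRecord η (a + m)) (n : ℕ) : cF η a (m + n) = cF η (a + m) n := by
  induction n with
  | zero =>
    have h1 := cF_card h ha m
    have h2 := h.runMin_step (a + m)
    have h3 := (h.rec_iff (a + m)).1 hb
    simp only [add_zero, cF]
    rw [← Finset.card_eq_zero]
    omega
  | succ n ih =>
    rw [← add_assoc, cF, cF, ih]
    congr 2
    push_cast; ring

structure Car (η : Cfg) (ξ : ℤ → ℤ) (A : ℤ → Finset ℕ) (σ : ℤ → ℕ) : Prop where
  good : Good η ξ
  recA : ∀ x, isRecord η x → A (x - 1) = ∅ ∧ A x = ∅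
  up : ∀ x, η x = true →
    σ x ∉ A (x - 1) ∧ (∀ j < σ x, j ∈ A (x - 1)) ∧ A x = insert (σ x) (A (x - 1))
  down : ∀ x, ¬ isRecord η x → η x = false →
    σ x ∈ A (x - 1) ∧ (∀ j < σ x, j ∉ A (x - 1)) ∧ A x = (A (x - 1)).erase (σ x)
  card : ∀ x, ((A x).card : ℤ) = ξ x - runMin ξ x

theorem car_exists {η : Cfg} {ξ : ℤ → ℤ} (h : Good η ξ) : ∃ A σ, Car η ξ A σ := by
  choose rc rc1 rc2 using h.rec_left
  let A : ℤ → Finset ℕ := fun x => cF η (rc x) (x - rc x).toNat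
  have hA : ∀ x a, isRecord η a → a ≤ x → A x = cF η a (x - a).toNat := by
    intro x a ha hax
    have key : ∀ a b, isRecord η a → isRecord η b → a ≤ b → b ≤ x →
        cF η a (x - a).toNat = cF η b (x - b).toNat := by
      intro a b ha hb hab hbx
      have e : b = a + ((b - a).toNat : ℤ) := by omega
      have := cF_indep h ha (b - a).toNat (by rw [← e]; exact hb) (x - b).toNat
      rw [← e] at this
      rw [← this]
      congr 1; omega
    rcases le_total a (rc x) with h1 | h1
    · exact (key a (rc x) ha (rc2 x) h1 (rc1 x)).symm
    · exact key (rc x) a (rc2 x) ha h1 hax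
  have hcard : ∀ x, ((A x).card : ℤ) = ξ x - runMin ξ x := by
    intro x
    have h1 := cF_card h (rc2 x) (x - rc x).toNat
    have e : rc x + ((x - rc x).toNat : ℤ) = x := by have := rc1 x; omega
    rw [e] at h1
    exact h1
  have hstep : ∀ x, A x = stp (η x) (A (x - 1)) := by
    intro x
    have h1 := rc1 (x - 1)
    rw [hA x (rc (x - 1)) (rc2 _) (by omega), hA (x - 1) (rc (x - 1)) (rc2 _) h1]
    have e : (x - rc (x - 1)).toNat = (x - 1 - rc (x - 1)).toNat + 1 := by omega
    rw [e, cF]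
    congr 2; omega
  refine ⟨A, fun x => seat (η x) (A (x - 1)), h, ?_, ?_, ?_, hcard⟩
  · intro x hx
    have h1 := hcard (x - 1)
    have h2 := (h.rec_iff' x).1 hx
    have h3 : A (x - 1) = ∅ := by rw [← Finset.card_eq_zero]; omega
    refine ⟨h3, ?_⟩
    rw [hstep, h3, h2.1]; simp [stp]
  · intro x hx
    have := seat_true (A (x - 1))
    simp only [hx]
    refine ⟨this.1, this.2, ?_⟩
    rw [hstep, hx]; simp [stp]
  · intro x hr hx
    have h1 : (A (x - 1)).Nonempty := by
      rw [← Finset.card_pos]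
      have h1 := hcard (x - 1)
      have h2 := h.rec_iff' x
      have h3 : ξ (x - 1) ≠ runMin ξ (x - 1) := fun h4 => hr (h2.2 ⟨hx, h4⟩)
      have h4 := h.runMin_le (x := x - 1) (y := x - 1) le_rfl
      omega
    have := seat_false h1
    simp only [hx]
    refine ⟨this.1, this.2, ?_⟩
    rw [hstep, hx]; simp [stp]

/-! ### Part 4: structure of solitons in terms of seats -/

theorem exc_val {η : Cfg} {ξ : ℤ → ℤ} {A : ℤ → Finset ℕ} {σ : ℤ → ℕ} (C : Car η ξ A σ)
    (y : ℤ) (hy : isRecord η y) (n : ℕ) (hn : ∀ z, y < z → z < y + 1 + n → ¬ isRecord η z) :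
    Val σ (fun _ => false) ((List.range n).map fun n : ℕ => (y + 1 + n, η (y + 1 + n))) ∧
    St σ (fun _ => false) ((List.range n).map fun n : ℕ => (y + 1 + n, η (y + 1 + n))) =
      fun j => decide (j ∈ A (y + n)) := by
  induction n with
  | zero => simp [Val, St, (C.recA y hy).2]
  | succ n ih =>
    obtain ⟨h1, h2⟩ := ih (fun z hz hz' => hn z hz (by push_cast; omega))
    rw [List.range_succ, List.map_append, Val_append, St_append, h2]
    have hr : ¬ isRecord η (y + 1 + n) := hn _ (by omega) (by push_cast; omega)
    have e : y + 1 + (n:ℤ) - 1 = y + n := by ring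
    have e2 : y + ((n + 1 : ℕ) : ℤ) = y + 1 + n := by push_cast; ring
    rw [e2]
    simp only [List.map_cons, List.map_nil, Val, St, List.foldl_cons, List.foldl_nil, upd]
    cases hh : η (y + 1 + n)
    · obtain ⟨d1, d2, d3⟩ := C.down _ hr hh
      rw [e] at d1 d2 d3
      refine ⟨⟨h1, by simpa using d1, fun j hj => by simpa using d2 j hj, trivial⟩, ?_⟩
      funext j
      rw [d3]
      simp only [Function.update_apply, Finset.mem_erase]
      split_ifs with hj <;> simp [hj]
    · obtain ⟨d1, d2, d3⟩ := C.up _ hh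
      rw [e] at d1 d2 d3
      refine ⟨⟨h1, by simpa using d1, fun j hj => by simpa using d2 j hj, trivial⟩, ?_⟩
      funext j
      rw [d3]
      simp only [Function.update_apply, Finset.mem_insert]
      split_ifs with hj <;> simp [hj]

theorem exc_eq (η : Cfg) (y1 y2 : ℤ) : excursionWord η y1 y2 =
    (List.range (y2 - y1 - 1).toNat).map fun n : ℕ => (y1 + 1 + (n : ℤ), η (y1 + 1 + n)) := by
  unfold excursionWord
  have : (do let a ← List.range (y2 - y1 - 1).toNat; pure (a : ℤ)) =
      (List.range (y2 - y1 - 1).toNat).map (fun n : ℕ => (n : ℤ)) := by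
    rw [List.map_eq_flatMap]; rfl
  rw [this, List.map_map]
  rfl

theorem exc_mem {η : Cfg} {y1 y2 : ℤ} {a : ℤ × Bool} :
    a ∈ excursionWord η y1 y2 ↔ y1 < a.1 ∧ a.1 < y2 ∧ a.2 = η a.1 := by
  rw [exc_eq]
  simp only [List.mem_map, List.mem_range]
  constructor
  · rintro ⟨n, hn, rfl⟩
    refine ⟨by simp; omega, by simp; omega, rfl⟩
  · rintro ⟨h1, h2, h3⟩
    refine ⟨(a.1 - y1 - 1).toNat, by omega, ?_⟩
    have : y1 + 1 + ((a.1 - y1 - 1).toNat : ℤ) = a.1 := by omega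
    rw [this, ← h3]

theorem exc_sorted (η : Cfg) (y1 y2 : ℤ) :
    (excursionWord η y1 y2).Pairwise (fun a b => a.1 < b.1) := by
  rw [exc_eq, List.pairwise_map]
  refine List.pairwise_lt_range.imp ?_
  intro a b hab
  simp; omega

theorem exc_TSP {η : Cfg} {ξ : ℤ → ℤ} {A : ℤ → Finset ℕ} {σ : ℤ → ℕ} (C : Car η ξ A σ)
    {y1 y2 : ℤ} (h12 : y1 < y2) (h1 : isRecord η y1) (h2 : isRecord η y2)
    (hn : ∀ z : ℤ, y1 < z → z < y2 → ¬ isRecord η z) :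
    TSP σ (excursionWord η y1 y2) (tsSolitons (excursionWord η y1 y2)) := by
  have := exc_val C y1 h1 (y2 - y1 - 1).toNat (fun z hz hz' => hn z hz (by omega))
  rw [← exc_eq] at this
  refine ts_main σ _ _ (exc_sorted η y1 y2) this.1 ?_ le_rfl
  intro j
  have h3 := congrFun this.2 j
  rw [h3]
  have e : y1 + ((y2 - y1 - 1).toNat : ℤ) = y2 - 1 := by omega
  rw [e, (C.recA y2 h2).1]
  simp

theorem exc_surround {η : Cfg} {ξ : ℤ → ℤ} (h : Good η ξ) {x : ℤ} (hx : ¬ isRecord η x) :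
    ∃ y1 y2 : ℤ, y1 < x ∧ x < y2 ∧ isRecord η y1 ∧ isRecord η y2 ∧
    (∀ z : ℤ, y1 < z → z < y2 → ¬ isRecord η z) := by
  obtain ⟨a, ha, ha'⟩ := h.rec_left x
  obtain ⟨b, hb, hb'⟩ := h.rec_right x
  obtain ⟨y1, ⟨h1, h1'⟩, h1m⟩ := Int.exists_greatest_of_bdd (P := fun z => z ≤ x ∧ isRecord η z)
    ⟨x, fun z hz => hz.1⟩ ⟨a, ha, ha'⟩
  obtain ⟨y2, ⟨h2, h2'⟩, h2m⟩ := Int.exists_least_of_bdd (P := fun z => x ≤ z ∧ isRecord η z)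
    ⟨x, fun z hz => hz.1⟩ ⟨b, hb, hb'⟩
  have n1 : y1 ≠ x := fun e => hx (e ▸ h1')
  have n2 : y2 ≠ x := fun e => hx (e ▸ h2')
  refine ⟨y1, y2, by omega, by omega, h1', h2', ?_⟩
  intro z hz1 hz2 hz
  rcases le_total z x with hh | hh
  · have := h1m z ⟨hh, hz⟩; omega
  · have := h2m z ⟨hh, hz⟩; omega


structure GP (η : Cfg) (σ : ℤ → ℕ) (γ : Finset ℤ) (m : ℕ) : Prop where
  pos : 1 ≤ m
  nrec : ∀ x ∈ γ, ¬ isRecord η x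
  lt : ∀ x ∈ γ, σ x < m
  ex : ∀ b j, j < m → ∃ x ∈ γ, η x = b ∧ σ x = j
  mono : ∀ x ∈ γ, ∀ y ∈ γ, η x = η y → (x < y ↔ σ x < σ y)
  gap : ∀ x ∈ γ, ∀ y ∈ γ, η x = η y → σ y = σ x + 1 → ∀ z, x < z → z < y → σ z < σ x
  hull : ∀ x ∈ γ, ∀ y ∈ γ, ∀ z, x ≤ z → z ≤ y → ¬ isRecord η z ∧ σ z < m

section
variable {η : Cfg} {ξ : ℤ → ℤ} {A : ℤ → Finset ℕ} {σ : ℤ → ℕ}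

theorem gamma_GP (C : Car η ξ A σ) {m : ℕ} {γ : Finset ℤ} (hγ : γ ∈ Gamma η m) : GP η σ γ m := by
  obtain ⟨y1, y2, h12, r1, r2, hn, s, hs, hlen, rfl⟩ := hγ
  have T := exc_TSP C h12 r1 r2 hn
  have hsub := T.sub s hs
  have hsw : ∀ a ∈ s, y1 < a.1 ∧ a.1 < y2 ∧ a.2 = η a.1 := fun a ha => exc_mem.1 (hsub.subset ha)
  obtain ⟨k, hk⟩ := T.shape s hs
  have hkm : k = m := by have := hk.len; omega
  subst hkm
  have hmem : ∀ x, x ∈ (s.map Prod.fst).toFinset ↔ (x, η x) ∈ s := by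
    intro x
    simp only [List.mem_toFinset, List.mem_map]
    constructor
    · rintro ⟨a, ha, rfl⟩
      rw [← (hsw a ha).2.2]; exact ha
    · intro h; exact ⟨_, h, rfl⟩
  have hsort := (exc_sorted η y1 y2).sublist hsub
  have hmono := hk.mono hsort
  have hlt := hk.lt
  refine ⟨?_, ?_, ?_, ?_, ?_, ?_, ?_⟩
  · obtain ⟨_, _, _, _, _, _, h, _⟩ := hk; exact h
  · intro x hx
    rw [hmem] at hx
    have := hsw _ hx
    exact hn x this.1 this.2.1
  · intro x hx
    rw [hmem] at hx
    exact hlt _ hx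
  · intro b j hj
    obtain ⟨A', B', c, rfl, h1, h2, _, lA, lB, hA, hB⟩ := hk
    have fin : ∀ a ∈ A' ++ B', a.2 = b → σ a.1 = j → ∃ x ∈ ((A' ++ B').map Prod.fst).toFinset, η x = b ∧ σ x = j := by
      intro a ha hab haj
      have h5 := hsw a ha
      refine ⟨a.1, ?_, by rw [← h5.2.2, hab], haj⟩
      rw [hmem, ← h5.2.2]; exact ha
    by_cases hb : b = c
    · have : j ∈ A'.map (fun a => σ a.1) := by rw [hA]; simpa using hj
      obtain ⟨a, ha, haj⟩ := List.mem_map.1 this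
      exact fin a (by simp [ha]) (by rw [lA a ha, hb]) haj
    · have : j ∈ B'.map (fun a => σ a.1) := by rw [hB]; simpa using hj
      obtain ⟨a, ha, haj⟩ := List.mem_map.1 this
      refine fin a (by simp [ha]) ?_ haj
      rw [lB a ha]; cases b <;> cases c <;> simp_all
  · intro x hx y hy hxy
    rw [hmem] at hx hy
    exact hmono _ hx _ hy hxy
  · intro x hx y hy hxy hσ z h1 h2
    rw [hmem] at hx hy
    have := hsw _ hx
    have := hsw _ hy
    exact T.gap s hs _ hx _ hy hxy hσ (z, η z) (exc_mem.2 ⟨by simp at *; omega, by simp at *; omega, rfl⟩) h1 h2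
  · intro x hx y hy z h1 h2
    rw [hmem] at hx hy
    have := hsw _ hx
    have := hsw _ hy
    refine ⟨hn z (by simp at *; omega) (by simp at *; omega), ?_⟩
    have := T.hull s hs _ hx _ hy (z, η z) (exc_mem.2 ⟨by simp at *; omega, by simp at *; omega, rfl⟩) h1 h2
    simp at this; omega

theorem gamma_cover (C : Car η ξ A σ) {x : ℤ} (hx : ¬ isRecord η x) :
    ∃ m γ, γ ∈ Gamma η m ∧ x ∈ γ := by
  obtain ⟨y1, y2, h1, h2, r1, r2, hn⟩ := exc_surround C.good hx
  have T := exc_TSP C (h1.trans h2) r1 r2 hn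
  obtain ⟨s, hs, hxs⟩ := T.cover (x, η x) (exc_mem.2 ⟨h1, h2, rfl⟩)
  obtain ⟨k, hk⟩ := T.shape s hs
  refine ⟨k, (s.map Prod.fst).toFinset, ⟨y1, y2, h1.trans h2, r1, r2, hn, s, hs, hk.len, rfl⟩, ?_⟩
  simp only [List.mem_toFinset, List.mem_map]
  exact ⟨_, hxs, rfl⟩

theorem gamma_uniq (C : Car η ξ A σ) {m m' : ℕ} {γ γ' : Finset ℤ} (hγ : γ ∈ Gamma η m)
    (hγ' : γ' ∈ Gamma η m') {x : ℤ} (hx : x ∈ γ) (hx' : x ∈ γ') : γ = γ' := by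
  obtain ⟨y1, y2, h12, r1, r2, hn, s, hs, hlen, rfl⟩ := hγ
  obtain ⟨y1', y2', h12', r1', r2', hn', s', hs', hlen', rfl⟩ := hγ'
  have T := exc_TSP C h12 r1 r2 hn
  have T' := exc_TSP C h12' r1' r2' hn'
  simp only [List.mem_toFinset, List.mem_map] at hx hx'
  obtain ⟨a, ha, rfl⟩ := hx
  obtain ⟨a', ha', haa⟩ := hx'
  have e := exc_mem.1 ((T.sub s hs).subset ha)
  have e' := exc_mem.1 ((T'.sub s' hs').subset ha')
  have haa' : a' = a := by
    ext1
    · exact haa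
    · rw [e.2.2, e'.2.2, haa]
  subst haa'
  have n1 : y1 = y1' := by
    rcases lt_trichotomy y1 y1' with h | h | h
    · exact absurd r1' (hn y1' h (by omega))
    · exact h
    · exact absurd r1 (hn' y1 h (by omega))
  have n2 : y2 = y2' := by
    rcases lt_trichotomy y2 y2' with h | h | h
    · exact absurd r2 (hn' y2 (by omega) h)
    · exact h
    · exact absurd r2' (hn y2' (by omega) h)
  subst n1 n2
  rw [T.disj s hs s' hs' a' ha ha']

theorem GP.size {γ : Finset ℤ} {m m' : ℕ} (h : GP η σ γ m) (h' : GP η σ γ m') : m = m' := by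
  have p := h.pos
  have p' := h'.pos
  obtain ⟨x, hx, _, hs⟩ := h.ex true (m - 1) (by omega)
  obtain ⟨x', hx', _, hs'⟩ := h'.ex true (m' - 1) (by omega)
  have := h'.lt x hx
  have := h.lt x' hx'
  omega

theorem GP.inj {γ : Finset ℤ} {m : ℕ} (h : GP η σ γ m) {x y : ℤ} (hx : x ∈ γ) (hy : y ∈ γ)
    (he : η x = η y) (hs : σ x = σ y) : x = y := by
  have h1 := h.mono x hx y hy he
  have h2 := h.mono y hy x hx he.symm
  rcases lt_trichotomy x y with h3 | h3 | h3
  · have := h1.1 h3; omega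
  · exact h3
  · have := h2.1 h3; omega

theorem GP.rank {γ : Finset ℤ} {m : ℕ} (h : GP η σ γ m) {x : ℤ} (hx : x ∈ γ) (b : Bool)
    (hb : η x = b) : ((γ.filter (fun y => η y = b)).filter (fun y => y ≤ x)).card = σ x + 1 := by
  rw [← Finset.card_range (σ x + 1)]
  apply Finset.card_bij (fun y _ => σ y)
  · intro y hy
    simp only [Finset.mem_filter] at hy
    have := h.mono x hx y hy.1.1 (by rw [hb, hy.1.2])
    rw [Finset.mem_range]
    by_contra hlt
    have := this.2 (by omega)
    omega
  · intro y hy z hz hyz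
    simp only [Finset.mem_filter] at hy hz
    exact h.inj hy.1.1 hz.1.1 (by rw [hy.1.2, hz.1.2]) hyz
  · intro j hj
    rw [Finset.mem_range] at hj
    have := h.lt x hx
    obtain ⟨y, hy, hyb, hyj⟩ := h.ex b j (by omega)
    refine ⟨y, ?_, hyj⟩
    simp only [Finset.mem_filter]
    refine ⟨⟨hy, hyb⟩, ?_⟩
    by_contra hlt
    have := (h.mono x hx y hy (by rw [hb, hyb])).1 (by omega)
    omega

theorem GP.tail_iff {γ : Finset ℤ} {m : ℕ} (h : GP η σ γ m) (k : ℕ) (x : ℤ) :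
    (x ∈ tailF η γ ∧ k < ((tailF η γ).filter fun y => y ≤ x).card) ↔
      x ∈ γ ∧ η x = false ∧ k ≤ σ x := by
  unfold tailF
  rw [Finset.mem_filter]
  constructor
  · rintro ⟨⟨h1, h2⟩, h3⟩
    rw [h.rank h1 false h2] at h3
    exact ⟨h1, h2, by omega⟩
  · rintro ⟨h1, h2, h3⟩
    refine ⟨⟨h1, h2⟩, ?_⟩
    rw [h.rank h1 false h2]; omega

theorem GP.head_iff {γ : Finset ℤ} {m : ℕ} (h : GP η σ γ m) (k : ℕ) (x : ℤ) :
    (x ∈ headF η γ ∧ k < ((headF η γ).filter fun y => y ≤ x).card) ↔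
      x ∈ γ ∧ η x = true ∧ k ≤ σ x := by
  unfold headF
  rw [Finset.mem_filter]
  constructor
  · rintro ⟨⟨h1, h2⟩, h3⟩
    rw [h.rank h1 true h2] at h3
    exact ⟨h1, h2, by omega⟩
  · rintro ⟨h1, h2, h3⟩
    refine ⟨⟨h1, h2⟩, ?_⟩
    rw [h.rank h1 true h2]; omega

theorem GP.level_iff {γ : Finset ℤ} {m : ℕ} (h : GP η σ γ m) (k : ℕ) (x : ℤ) :
    ((x ∈ tailF η γ ∧ k < ((tailF η γ).filter fun y => y ≤ x).card) ∨
      (x ∈ headF η γ ∧ k < ((headF η γ).filter fun y => y ≤ x).card)) ↔ x ∈ γ ∧ k ≤ σ x := by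
  rw [h.tail_iff, h.head_iff]
  cases η x <;> simp

theorem kslot_iff (C : Car η ξ A σ) (k : ℕ) (x : ℤ) :
    IsKSlot η k x ↔ isRecord η x ∨ k ≤ σ x ∧ ¬ isRecord η x := by
  unfold IsKSlot
  constructor
  · rintro (h | ⟨m, γ, hγ, h⟩)
    · exact Or.inl h
    · have G := gamma_GP C hγ
      rw [G.level_iff] at h
      exact Or.inr ⟨h.2, G.nrec x h.1⟩
  · rintro (h | ⟨h, hr⟩)
    · exact Or.inl h
    · obtain ⟨m, γ, hγ, hx⟩ := gamma_cover C hr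
      refine Or.inr ⟨m, γ, hγ, ?_⟩
      rw [(gamma_GP C hγ).level_iff]
      exact ⟨hx, h⟩

end


/-! ### Part 5: one step of the dynamics -/

section
variable {η : Cfg} {ξ : ℤ → ℤ} {A A' : ℤ → Finset ℕ} {σ σ' : ℤ → ℕ}

theorem bbsT_true_iff (η : Cfg) (x : ℤ) : bbsT η x = true ↔ η x = false ∧ ¬ isRecord η x := by
  unfold bbsT
  split_ifs with h <;> simp [h]

theorem bbsT_false_iff (η : Cfg) (x : ℤ) : bbsT η x = false ↔ (η x = true ∨ isRecord η x) := by
  unfold bbsT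
  split_ifs with h <;> simp [h]

theorem true_nrec (h : Good η ξ) {x : ℤ} (hx : η x = true) : ¬ isRecord η x := by
  intro hr
  have := h.rec_false hr
  rw [hx] at this; simp at this

def CInv (A A' : ℤ → Finset ℕ) (x : ℤ) : Prop :=
  ∀ i j, i ∈ A x → j ≤ i → (j ∈ A' x ↔ j ∉ A x)

theorem down_eq (C : Car η ξ A σ) (C' : Car (bbsT η) (liftT ξ) A' σ') {x : ℤ}
    (hI : CInv A A' (x - 1)) (hx : η x = false) (hr : ¬ isRecord η x) : σ' x = σ x := by
  obtain ⟨d1, d2, d3⟩ := C.down x hr hx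
  obtain ⟨u1, u2, u3⟩ := C'.up x ((bbsT_true_iff η x).2 ⟨hx, hr⟩)
  rcases lt_trichotomy (σ' x) (σ x) with h | h | h
  · exact absurd ((hI (σ x) (σ' x) d1 h.le).2 (d2 _ h)) u1
  · exact h
  · exact absurd d1 ((hI (σ x) (σ x) d1 le_rfl).1 (u2 _ h))

theorem up_eq (C : Car η ξ A σ) (C' : Car (bbsT η) (liftT ξ) A' σ') {x : ℤ}
    (hI : CInv A A' (x - 1)) (hx : η x = true) {i : ℕ} (hi : i ∈ A (x - 1)) (hi2 : σ x ≤ i) :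
    ¬ isRecord (bbsT η) x ∧ σ' x = σ x := by
  obtain ⟨u1, u2, u3⟩ := C.up x hx
  have hs : σ x ∈ A' (x - 1) := (hI i _ hi hi2).2 u1
  have hr : ¬ isRecord (bbsT η) x := by
    intro h
    rw [(C'.recA x h).1] at hs
    simp at hs
  refine ⟨hr, ?_⟩
  obtain ⟨d1, d2, d3⟩ := C'.down x hr ((bbsT_false_iff η x).2 (Or.inl hx))
  rcases lt_trichotomy (σ' x) (σ x) with h | h | h
  · have := (hI (σ' x) (σ' x) (u2 _ h) le_rfl).1 d1
    exact absurd (u2 _ h) this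
  · exact h
  · exact absurd hs (d2 _ h)

theorem up_ge (C : Car η ξ A σ) (C' : Car (bbsT η) (liftT ξ) A' σ') {x : ℤ}
    (hI : CInv A A' (x - 1)) (hx : η x = true) (hr : ¬ isRecord (bbsT η) x) : σ x ≤ σ' x := by
  obtain ⟨u1, u2, u3⟩ := C.up x hx
  obtain ⟨d1, d2, d3⟩ := C'.down x hr ((bbsT_false_iff η x).2 (Or.inl hx))
  by_contra h
  have h := not_le.1 h
  have := (hI (σ' x) (σ' x) (u2 _ h) le_rfl).1 d1
  exact absurd (u2 _ h) this

theorem inv_step (C : Car η ξ A σ) (C' : Car (bbsT η) (liftT ξ) A' σ') {x : ℤ}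
    (hI : CInv A A' (x - 1)) : CInv A A' x := by
  intro i j hi hj
  by_cases hr : isRecord η x
  · rw [(C.recA x hr).2] at hi; simp at hi
  · cases hx : η x
    · have e := down_eq C C' hI hx hr
      obtain ⟨d1, d2, d3⟩ := C.down x hr hx
      obtain ⟨u1, u2, u3⟩ := C'.up x ((bbsT_true_iff η x).2 ⟨hx, hr⟩)
      rw [d3] at hi ⊢
      rw [u3, e]
      have := hI i j (Finset.mem_of_mem_erase hi) hj
      rw [Finset.mem_insert, Finset.mem_erase, this]
      tauto
    · obtain ⟨u1, u2, u3⟩ := C.up x hx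
      by_cases hh : ∃ i ∈ A (x - 1), σ x ≤ i
      · obtain ⟨i', hi', hi2⟩ := hh
        obtain ⟨hr', e⟩ := up_eq C C' hI hx hi' hi2
        obtain ⟨d1, d2, d3⟩ := C'.down x hr' ((bbsT_false_iff η x).2 (Or.inl hx))
        rw [u3] at hi ⊢
        rw [d3, e, Finset.mem_erase, Finset.mem_insert]
        have : j ∈ A' (x - 1) ↔ j ∉ A (x - 1) := by
          rcases Finset.mem_insert.1 hi with rfl | hi
          · exact hI i' j hi' (by omega)
          · exact hI i j hi hj
        rw [this]; tauto
      · push Not at hh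
        have hle : j ≤ σ x := by
          rw [u3] at hi
          rcases Finset.mem_insert.1 hi with rfl | hi
          · exact hj
          · have := hh i hi; omega
        have hjA : j ∈ A x := by
          rw [u3, Finset.mem_insert]
          rcases hle.lt_or_eq with h | h
          · exact Or.inr (u2 j h)
          · exact Or.inl h
        have hj' : j < σ x → j ∉ A' (x - 1) := fun h =>
          fun h' => (hI j j (u2 j h) le_rfl).1 h' (u2 j h)
        simp only [hjA, not_true_eq_false, iff_false]
        by_cases hr' : isRecord (bbsT η) x
        · rw [(C'.recA x hr').2]; simp
        · have hge := up_ge C C' hI hx hr'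
          obtain ⟨d1, d2, d3⟩ := C'.down x hr' ((bbsT_false_iff η x).2 (Or.inl hx))
          rw [d3, Finset.mem_erase]
          rintro ⟨h1, h2⟩
          rcases hle.lt_or_eq with h | h
          · exact hj' h h2
          · exact d2 j (by omega) h2

theorem inv_all (C : Car η ξ A σ) (C' : Car (bbsT η) (liftT ξ) A' σ') (x : ℤ) : CInv A A' x := by
  obtain ⟨a, ha, har⟩ := C.good.rec_left x
  obtain ⟨n, rfl⟩ := Int.le.dest ha
  clear ha
  induction n with
  | zero =>
    intro i j hi
    simp only [Nat.cast_zero, add_zero] at hi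
    rw [(C.recA a har).2] at hi; simp at hi
  | succ n ih =>
    apply inv_step C C'
    rw [show a + ((n + 1 : ℕ) : ℤ) - 1 = a + n by push_cast; ring]
    exact ih

theorem sig_eq (C : Car η ξ A σ) (C' : Car (bbsT η) (liftT ξ) A' σ') {x : ℤ}
    (hx : bbsT η x = true) : σ' x = σ x := by
  rw [bbsT_true_iff] at hx
  exact down_eq C C' (inv_all C C' _) hx.1 hx.2

theorem mem_tail {γ : Finset ℤ} {x : ℤ} : x ∈ tailF η γ ↔ x ∈ γ ∧ η x = false := by
  simp [tailF]

theorem mem_head {γ : Finset ℤ} {x : ℤ} : x ∈ headF η γ ↔ x ∈ γ ∧ η x = true := by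
  simp [headF]

/-- Tails and heads that share a site share all sites with smaller labels. -/
theorem link (C : Car η ξ A σ) (C' : Car (bbsT η) (liftT ξ) A' σ') {γ γ' : Finset ℤ} {m m' : ℕ}
    (hγ : γ ∈ Gamma η m) (hγ' : γ' ∈ Gamma (bbsT η) m') {x : ℤ} (hx : x ∈ tailF η γ)
    (hx' : x ∈ headF (bbsT η) γ') : ∀ d j, j + d = σ x →
    ∃ y, y ∈ tailF η γ ∧ y ∈ headF (bbsT η) γ' ∧ σ y = j := by
  have G := gamma_GP C hγ
  have G' := gamma_GP C' hγ'
  intro d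
  induction d with
  | zero => intro j hj; exact ⟨x, hx, hx', by omega⟩
  | succ d ih =>
    intro j hj
    obtain ⟨w, w1, w2, w3⟩ := ih (j + 1) (by omega)
    rw [mem_tail] at w1
    rw [mem_head] at w2
    have w4 := sig_eq C C' w2.2
    have := G.lt w w1.1
    have := G'.lt w w2.1
    obtain ⟨y, y1, y2, y3⟩ := G.ex false j (by omega)
    obtain ⟨z, z1, z2, z3⟩ := G'.ex true j (by omega)
    have hyT : bbsT η y = true := (bbsT_true_iff η y).2 ⟨y2, G.nrec y y1⟩
    have hz2 := (bbsT_true_iff η z).1 z2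
    have y4 := sig_eq C C' hyT
    have z4 := sig_eq C C' z2
    have hyw : y < w := (G.mono y y1 w w1.1 (by rw [y2, w1.2])).2 (by omega)
    have hzw : z < w := (G'.mono z z1 w w2.1 (by rw [z2, w2.2])).2 (by omega)
    have hyz : y = z := by
      rcases lt_trichotomy y z with h | h | h
      · have := G.gap y y1 w w1.1 (by rw [y2, w1.2]) (by omega) z h hzw
        omega
      · exact h
      · have := G'.gap z z1 w w2.1 (by rw [z2, w2.2]) (by omega) y h hyw
        omega
    subst hyz
    exact ⟨y, mem_tail.2 ⟨y1, y2⟩, mem_head.2 ⟨z1, z2⟩, y3⟩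

theorem match_fwd (C : Car η ξ A σ) (C' : Car (bbsT η) (liftT ξ) A' σ') {γ : Finset ℤ} {m : ℕ}
    (hγ : γ ∈ Gamma η m) : ∃ γ' ∈ Gamma (bbsT η) m, headF (bbsT η) γ' = tailF η γ := by
  have G := gamma_GP C hγ
  have hp := G.pos
  obtain ⟨x, x1, x2, x3⟩ := G.ex false (m - 1) (by omega)
  have hxT : bbsT η x = true := (bbsT_true_iff η x).2 ⟨x2, G.nrec x x1⟩
  have x4 := sig_eq C C' hxT
  obtain ⟨m', γ', hγ', hx'⟩ := gamma_cover C' (true_nrec C'.good hxT)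
  have G' := gamma_GP C' hγ'
  have hlt := G'.lt x hx'
  have hm : m' = m := by
    by_contra hne
    obtain ⟨y, y1, y2, y3⟩ := G'.ex true m (by omega)
    have y4 := sig_eq C C' y2
    obtain ⟨y5, y6⟩ := (bbsT_true_iff η y).1 y2
    obtain ⟨m2, γ2, hγ2, hy2⟩ := gamma_cover C y6
    obtain ⟨w, w1, w2, w3⟩ := link C C' hγ2 hγ' (mem_tail.2 ⟨hy2, y5⟩) (mem_head.2 ⟨y1, y2⟩)
      1 (m - 1) (by omega)
    rw [mem_head] at w2
    have w4 := sig_eq C C' w2.2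
    have : w = x := G'.inj w2.1 hx' (by rw [w2.2, hxT]) (by omega)
    subst this
    have := gamma_uniq C hγ hγ2 x1 (mem_tail.1 w1).1
    subst this
    have := G.lt y hy2
    omega
  subst hm
  refine ⟨γ', hγ', ?_⟩
  have L := link C C' hγ hγ' (mem_tail.2 ⟨x1, x2⟩) (mem_head.2 ⟨hx', hxT⟩)
  ext y
  constructor
  · intro hy
    rw [mem_head] at hy
    have y4 := sig_eq C C' hy.2
    have := G'.lt y hy.1
    obtain ⟨w, w1, w2, w3⟩ := L (m' - 1 - σ y) (σ y) (by omega)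
    rw [mem_head] at w2
    have w4 := sig_eq C C' w2.2
    have : w = y := G'.inj w2.1 hy.1 (by rw [w2.2, hy.2]) (by omega)
    rw [← this]; exact w1
  · intro hy
    rw [mem_tail] at hy
    have := G.lt y hy.1
    obtain ⟨w, w1, w2, w3⟩ := L (m' - 1 - σ y) (σ y) (by omega)
    rw [mem_tail] at w1
    have : w = y := G.inj w1.1 hy.1 (by rw [w1.2, hy.2]) (by omega)
    rw [← this]; exact w2

theorem match_bwd (C : Car η ξ A σ) (C' : Car (bbsT η) (liftT ξ) A' σ') {γ' : Finset ℤ} {m : ℕ}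
    (hγ' : γ' ∈ Gamma (bbsT η) m) : ∃ γ ∈ Gamma η m, headF (bbsT η) γ' = tailF η γ := by
  have G' := gamma_GP C' hγ'
  have hp := G'.pos
  obtain ⟨x, x1, x2, x3⟩ := G'.ex true (m - 1) (by omega)
  obtain ⟨x4, x5⟩ := (bbsT_true_iff η x).1 x2
  obtain ⟨m2, γ, hγ, hxγ⟩ := gamma_cover C x5
  obtain ⟨γ'', hγ'', he⟩ := match_fwd C C' hγ
  have hx2 : x ∈ headF (bbsT η) γ'' := by rw [he]; exact mem_tail.2 ⟨hxγ, x4⟩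
  have := gamma_uniq C' hγ' hγ'' x1 (mem_head.1 hx2).1
  subst this
  have := G'.size (gamma_GP C' hγ'')
  subst this
  exact ⟨γ, hγ, he⟩

/-! Potential function -/

def cntk (k : ℕ) (B : Finset ℕ) : ℤ := ((B.filter (fun j => j < k)).card : ℤ)

theorem cntk_insert (k : ℕ) {B : Finset ℕ} {s : ℕ} (h : s ∉ B) :
    cntk k (insert s B) = cntk k B + if s < k then 1 else 0 := by
  unfold cntk
  rw [Finset.filter_insert]
  split_ifs with hs
  · rw [Finset.card_insert_of_notMem (by simp [h])]; push_cast; rfl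
  · simp

theorem cntk_erase (k : ℕ) {B : Finset ℕ} {s : ℕ} (h : s ∈ B) :
    cntk k B = cntk k (B.erase s) + if s < k then 1 else 0 := by
  rw [← cntk_insert k (Finset.notMem_erase s B), Finset.insert_erase h]

open Classical in
/-- indicator of `k`-slots -/
noncomputable def ik (η : Cfg) (k : ℕ) (x : ℤ) : ℤ := if IsKSlot η k x then 1 else 0

open Classical in
theorem ik_eq (C : Car η ξ A σ) (k : ℕ) (x : ℤ) :
    ik η k x = if isRecord η x then 1 else if σ x < k then 0 else 1 := by
  unfold ik
  rw [kslot_iff C]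
  by_cases h : isRecord η x <;> by_cases h' : σ x < k <;> simp [h, h'] <;> omega

theorem potential (C : Car η ξ A σ) (C' : Car (bbsT η) (liftT ξ) A' σ') (k : ℕ) (x : ℤ) :
    ik (bbsT η) k x - ik η k x =
      (cntk k (A x) + cntk k (A' x)) - (cntk k (A (x - 1)) + cntk k (A' (x - 1))) := by
  have hI := inv_all C C' (x - 1)
  rw [ik_eq C, ik_eq C']
  by_cases hr : isRecord η x
  · obtain ⟨a1, a2⟩ := C.recA x hr
    rw [if_pos hr, a1, a2]
    by_cases hr' : isRecord (bbsT η) x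
    · obtain ⟨a1, a2⟩ := C'.recA x hr'
      rw [if_pos hr', a1, a2]; ring
    · obtain ⟨d1, d2, d3⟩ := C'.down x hr' ((bbsT_false_iff η x).2 (Or.inr hr))
      rw [if_neg hr', d3, cntk_erase k d1]
      split_ifs <;> ring
  · rw [if_neg hr]
    cases hx : η x
    · have hT := (bbsT_true_iff η x).2 ⟨hx, hr⟩
      have e := down_eq C C' hI hx hr
      obtain ⟨d1, d2, d3⟩ := C.down x hr hx
      obtain ⟨u1, u2, u3⟩ := C'.up x hT
      rw [if_neg (true_nrec C'.good hT), d3, u3, cntk_insert k u1, cntk_erase k d1, e]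
      split_ifs <;> ring
    · obtain ⟨u1, u2, u3⟩ := C.up x hx
      rw [u3, cntk_insert k u1]
      by_cases hr' : isRecord (bbsT η) x
      · obtain ⟨a1, a2⟩ := C'.recA x hr'
        rw [if_pos hr', a1, a2]
        split_ifs <;> ring
      · obtain ⟨d1, d2, d3⟩ := C'.down x hr' ((bbsT_false_iff η x).2 (Or.inl hx))
        have hge := up_ge C C' hI hx hr'
        rw [if_neg hr', d3, cntk_erase k d1]
        split_ifs with h1 h2 h2 <;> first | ring | omega

/-- Right after the last tail site of a `k`-soliton the potential equals `k`. -/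
theorem potential_val (C : Car η ξ A σ) (C' : Car (bbsT η) (liftT ξ) A' σ') {k : ℕ} (hk : 1 ≤ k) {x : ℤ}
    (hx : η x = false) (hr : ¬ isRecord η x) (hs : σ x = k - 1) :
    cntk k (A x) + cntk k (A' x) = k := by
  have hI := inv_all C C' (x - 1)
  have e := down_eq C C' hI hx hr
  obtain ⟨d1, d2, d3⟩ := C.down x hr hx
  obtain ⟨u1, u2, u3⟩ := C'.up x ((bbsT_true_iff η x).2 ⟨hx, hr⟩)
  have h1 : (A x).filter (fun j => j < k) = ∅ := by
    rw [Finset.filter_eq_empty_iff]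
    intro j hj hjk
    rw [d3, Finset.mem_erase] at hj
    exact d2 j (by omega) hj.2
  have h2 : (A' x).filter (fun j => j < k) = Finset.range k := by
    ext j
    rw [Finset.mem_filter, Finset.mem_range, u3, Finset.mem_insert, e]
    constructor
    · exact fun h => h.2
    · intro h
      refine ⟨?_, h⟩
      rcases lt_or_eq_of_le (show j ≤ k - 1 by omega) with h' | h'
      · exact Or.inr (u2 j (by omega))
      · exact Or.inl (by omega)
  unfold cntk
  rw [h1, h2]; simp

end


/-! ### Part 7: enumeration of slots -/

theorem enum_exists (S : Set ℤ) (b : ℤ) (hb : b ∈ S) (hl : ∀ a, ∃ x ∈ S, x < a)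
    (hr : ∀ a, ∃ x ∈ S, a < x) :
    ∃ f : ℤ → ℤ, StrictMono f ∧ f 0 = b ∧ Set.range f = S := by
  classical
  haveI : NoMaxOrder S := ⟨fun a => by obtain ⟨x, hx, h⟩ := hr a; exact ⟨⟨x, hx⟩, h⟩⟩
  haveI : NoMinOrder S := ⟨fun a => by obtain ⟨x, hx, h⟩ := hl a; exact ⟨⟨x, hx⟩, h⟩⟩
  haveI : Nonempty S := ⟨⟨b, hb⟩⟩
  letI : LocallyFiniteOrder S := Subtype.instLocallyFiniteOrder (fun x => x ∈ S)
  letI : SuccOrder S := LinearLocallyFiniteOrder.succOrder S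
  letI : PredOrder S := LinearLocallyFiniteOrder.predOrder S
  haveI : IsSuccArchimedean S := inferInstance
  let e : S ≃o ℤ := orderIsoIntOfLinearSuccPredArch
  refine ⟨fun i => (e.symm (i + e ⟨b, hb⟩) : S), ?_, ?_, ?_⟩
  · intro i j hij
    have : e.symm (i + e ⟨b, hb⟩) < e.symm (j + e ⟨b, hb⟩) := e.symm.strictMono (by omega)
    exact this
  · simp
  · ext x
    constructor
    · rintro ⟨i, rfl⟩; exact (e.symm _).2
    · intro hx
      exact ⟨e ⟨x, hx⟩ - e ⟨b, hb⟩, by simp⟩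

theorem enumZ_spec (S : Set ℤ) (b : ℤ) (hb : b ∈ S) (hl : ∀ a, ∃ x ∈ S, x < a)
    (hr : ∀ a, ∃ x ∈ S, a < x) :
    StrictMono (enumZ S b) ∧ enumZ S b 0 = b ∧ Set.range (enumZ S b) = S := by
  have h := enum_exists S b hb hl hr
  unfold enumZ
  rw [dif_pos h]
  exact h.choose_spec

theorem skEnum_spec {η : Cfg} {ξ : ℤ → ℤ} (h : Good η ξ) (k : ℕ) :
    StrictMono (skEnum η ξ k) ∧ skEnum η ξ k 0 = recPos ξ 0 ∧
      ∀ x, IsKSlot η k x ↔ ∃ i, skEnum η ξ k i = x := by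
  obtain ⟨h1, h2, h3⟩ := enumZ_spec {x : ℤ | IsKSlot η k x} (recPos ξ 0)
    (Or.inl (h.recPos_spec 0).2.1)
    (fun a => by
      obtain ⟨x, hx, hr⟩ := h.rec_left (a - 1)
      exact ⟨x, Or.inl hr, by omega⟩)
    (fun a => by
      obtain ⟨x, hx, hr⟩ := h.rec_right (a + 1)
      exact ⟨x, Or.inl hr, by omega⟩)
  refine ⟨h1, h2, fun x => ?_⟩
  have : x ∈ Set.range (enumZ {x : ℤ | IsKSlot η k x} (recPos ξ 0)) ↔ IsKSlot η k x := by
    rw [h3]; rfl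
  rw [← this]; rfl

theorem galois_exists {f : ℤ → ℤ} (hf : StrictMono f) (x : ℤ) : ∃ n, ∀ i, f i ≤ x ↔ i ≤ n := by
  have up : ∀ n : ℕ, f 0 + n ≤ f n := by
    intro n
    induction n with
    | zero => simp
    | succ n ih =>
      have : f n < f (n + 1 : ℕ) := hf (by push_cast; omega)
      push_cast at *; omega
  have dn : ∀ n : ℕ, f (-n) ≤ f 0 - n := by
    intro n
    induction n with
    | zero => simp
    | succ n ih =>
      have : f (-(n + 1 : ℕ)) < f (-n) := hf (by push_cast; omega)
      push_cast at *; omega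
  obtain ⟨n, hn, hn2⟩ := Int.exists_greatest_of_bdd (P := fun i => f i ≤ x)
    ⟨(x - f 0).toNat + 1, fun z hz => by
      by_contra hc
      have := up ((x - f 0).toNat + 1)
      have h2 : f (((x - f 0).toNat + 1 : ℕ) : ℤ) < f z := hf (by push_cast; omega)
      push_cast at *; omega⟩
    ⟨-((f 0 - x).toNat : ℕ), by have := dn (f 0 - x).toNat; omega⟩
  exact ⟨n, fun i => ⟨hn2 i, fun hi => (hf.monotone hi).trans hn⟩⟩

open Classical in
/-- index of the last `k`-slot weakly left of `x` -/
noncomputable def Nk (η : Cfg) (ξ : ℤ → ℤ) (k : ℕ) (x : ℤ) : ℤ :=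
  if h : ∃ n, ∀ i, skEnum η ξ k i ≤ x ↔ i ≤ n then h.choose else 0

section
variable {η : Cfg} {ξ : ℤ → ℤ} {A A' : ℤ → Finset ℕ} {σ σ' : ℤ → ℕ}

theorem Nk_spec (h : Good η ξ) (k : ℕ) (x i : ℤ) : skEnum η ξ k i ≤ x ↔ i ≤ Nk η ξ k x := by
  have he := galois_exists (skEnum_spec h k).1 x
  unfold Nk
  rw [dif_pos he]
  exact he.choose_spec i

theorem Nk_rec (h : Good η ξ) (k : ℕ) : Nk η ξ k (recPos ξ 0) = 0 := by
  obtain ⟨h1, h2, h3⟩ := skEnum_spec h k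
  have : ∀ i, i ≤ 0 ↔ i ≤ Nk η ξ k (recPos ξ 0) := by
    intro i; rw [← Nk_spec h, ← h2, h1.le_iff_le]
  exact le_antisymm ((this _).2 le_rfl) ((this 0).1 le_rfl)

theorem Nk_step (h : Good η ξ) (k : ℕ) (x : ℤ) :
    Nk η ξ k x - Nk η ξ k (x - 1) = ik η k x := by
  obtain ⟨h1, h2, h3⟩ := skEnum_spec h k
  unfold ik
  split_ifs with hs
  · obtain ⟨j, hj⟩ := (h3 x).1 hs
    have a : ∀ i, i ≤ j ↔ i ≤ Nk η ξ k x := by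
      intro i; rw [← Nk_spec h, ← hj, h1.le_iff_le]
    have b : ∀ i, i ≤ j - 1 ↔ i ≤ Nk η ξ k (x - 1) := by
      intro i
      rw [← Nk_spec h, ← hj, Int.le_sub_one_iff, Int.le_sub_one_iff, h1.lt_iff_lt]
    have := (a _).2 le_rfl
    have := (a j).1 le_rfl
    have := (b _).2 le_rfl
    have := (b _).1 le_rfl
    omega
  · have a : ∀ i, i ≤ Nk η ξ k x ↔ i ≤ Nk η ξ k (x - 1) := by
      intro i
      rw [← Nk_spec h, ← Nk_spec h]
      have : skEnum η ξ k i ≠ x := fun e => hs ((h3 x).2 ⟨i, e⟩)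
      omega
    have := (a _).2 le_rfl
    have := (a _).1 le_rfl
    omega

theorem const_of_step {F : ℤ → ℤ} (hF : ∀ x, F x = F (x - 1)) (x y : ℤ) : F x = F y := by
  have key : ∀ (n : ℕ) (a : ℤ), F (a + n) = F a := by
    intro n
    induction n with
    | zero => simp
    | succ n ih =>
      intro a
      rw [hF, ← ih a]; congr 1; push_cast; ring
  rcases le_total x y with h | h
  · obtain ⟨n, rfl⟩ := Int.le.dest h
    exact (key n x).symm
  · obtain ⟨n, rfl⟩ := Int.le.dest h
    exact key n y

theorem GP.not_slot (C : Car η ξ A σ) {γ : Finset ℤ} {k : ℕ} (G : GP η σ γ k) {x y z : ℤ}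
    (hx : x ∈ γ) (hy : y ∈ γ) (h1 : x ≤ z) (h2 : z ≤ y) : ¬ IsKSlot η k z := by
  rw [kslot_iff C]
  have := G.hull x hx y hy z h1 h2
  rintro (h | h)
  · exact this.1 h
  · omega

theorem Nk_const (C : Car η ξ A σ) {γ : Finset ℤ} {k : ℕ} (hγ : γ ∈ Gamma η k) {x y : ℤ}
    (hx : x ∈ γ) (hy : y ∈ γ) : Nk η ξ k x = Nk η ξ k y := by
  have G := gamma_GP C hγ
  wlog h : x ≤ y generalizing x y
  · exact (this hy hx (by omega)).symm
  have key : ∀ n : ℕ, x + n ≤ y → Nk η ξ k (x + n) = Nk η ξ k x := by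
    intro n
    induction n with
    | zero => simp
    | succ n ih =>
      intro hn
      push_cast at hn
      have e := Nk_step C.good k (x + (n + 1 : ℕ))
      have : ik η k (x + (n + 1 : ℕ)) = 0 := by
        unfold ik
        rw [if_neg (G.not_slot C hx hy (by push_cast; omega) (by push_cast; omega))]
      have e2 : x + ((n + 1 : ℕ) : ℤ) - 1 = x + n := by push_cast; ring
      rw [this, e2, ih (by omega)] at e
      omega
  obtain ⟨n, rfl⟩ := Int.le.dest h
  exact (key n le_rfl).symm

open Classical in
/-- index of the slot to which a soliton is appended -/
noncomputable def ind (η : Cfg) (ξ : ℤ → ℤ) (k : ℕ) (γ : Finset ℤ) : ℤ :=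
  if h : γ.Nonempty then Nk η ξ k h.choose else 0

theorem ind_spec (h : Good η ξ) {γ : Finset ℤ} {k : ℕ} (hγ : γ ∈ Gamma η k) {x : ℤ}
    (hx : x ∈ γ) : Nk η ξ k x = ind η ξ k γ := by
  obtain ⟨A, σ, C⟩ := car_exists h
  have hne : γ.Nonempty := ⟨x, hx⟩
  unfold ind
  rw [dif_pos hne]
  exact Nk_const C hγ hx hne.choose_spec

theorem gamma_ne (h : Good η ξ) {γ : Finset ℤ} {k : ℕ} (hγ : γ ∈ Gamma η k) : γ.Nonempty := by
  obtain ⟨A, σ, C⟩ := car_exists h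
  have G := gamma_GP C hγ
  obtain ⟨x, hx, _⟩ := G.ex false 0 G.pos
  exact ⟨x, hx⟩

theorem ind_ge (h : Good η ξ) {γ : Finset ℤ} {k : ℕ} (hγ : γ ∈ Gamma η k) (i : ℤ) :
    (∀ x ∈ γ, skEnum η ξ k i ≤ x) ↔ i ≤ ind η ξ k γ := by
  constructor
  · intro hh
    obtain ⟨x, hx⟩ := gamma_ne h hγ
    rw [← ind_spec h hγ hx, ← Nk_spec h]
    exact hh x hx
  · intro hh x hx
    rw [Nk_spec h, ind_spec h hγ hx]; exact hh

theorem ind_lt (h : Good η ξ) {γ : Finset ℤ} {k : ℕ} (hγ : γ ∈ Gamma η k) (i : ℤ) :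
    (∀ x ∈ γ, x < skEnum η ξ k i) ↔ ind η ξ k γ < i := by
  constructor
  · intro hh
    obtain ⟨x, hx⟩ := gamma_ne h hγ
    rw [← ind_spec h hγ hx, ← not_le, ← Nk_spec h, not_le]
    exact hh x hx
  · intro hh x hx
    rw [← not_le, Nk_spec h, ind_spec h hγ hx, not_le]; exact hh

theorem ind_rec_lt (h : Good η ξ) {γ : Finset ℤ} {k : ℕ} (hγ : γ ∈ Gamma η k) :
    (∀ x ∈ γ, x < recPos ξ 0) ↔ ind η ξ k γ < 0 := by
  rw [← (skEnum_spec h k).2.1]; exact ind_lt h hγ 0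

theorem ind_rec_ge (h : Good η ξ) {γ : Finset ℤ} {k : ℕ} (hγ : γ ∈ Gamma η k) :
    (∀ x ∈ γ, recPos ξ 0 ≤ x) ↔ 0 ≤ ind η ξ k γ := by
  rw [← (skEnum_spec h k).2.1]; exact ind_ge h hγ 0

theorem Mk_eq (h : Good η ξ) (k : ℕ) (i : ℤ) :
    Mk η ξ k i = Set.ncard {γ | γ ∈ Gamma η k ∧ ind η ξ k γ = i} := by
  obtain ⟨A, σ, C⟩ := car_exists h
  unfold Mk
  congr 1
  ext γ
  simp only [Set.mem_setOf_eq]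
  refine and_congr_right fun hγ => ?_
  have G := gamma_GP C hγ
  rw [forall₂_and, ind_lt h hγ]
  have : (∀ x ∈ γ, skEnum η ξ k i < x) ↔ (∀ x ∈ γ, skEnum η ξ k i ≤ x) := by
    refine forall₂_congr fun x hx => ?_
    have : skEnum η ξ k i ≠ x := fun e =>
      G.not_slot C hx hx le_rfl le_rfl (((skEnum_spec h k).2.2 x).2 ⟨i, e⟩)
    omega
  rw [this, ind_ge h hγ]
  omega

end


/-! ### Part 8: one time step -/

section
variable {η : Cfg} {ξ : ℤ → ℤ} {A A' : ℤ → Finset ℕ} {σ σ' : ℤ → ℕ}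

/-- sites in `(a,x]` with a ball at level at least `k` -/
noncomputable def Uk (η : Cfg) (σ : ℤ → ℕ) (k : ℕ) (a x : ℤ) : Finset ℤ :=
  (Finset.Ioc a x).filter fun y => η y = true ∧ k ≤ σ y

theorem Uk_succ (η : Cfg) (σ : ℤ → ℕ) (k : ℕ) (a : ℤ) (n : ℕ) :
    ((Uk η σ k a (a + n + 1)).card : ℤ) = (Uk η σ k a (a + n)).card +
      if η (a + n + 1) = true ∧ k ≤ σ (a + n + 1) then 1 else 0 := by
  have e : Finset.Ioc a (a + n + 1) = insert (a + n + 1) (Finset.Ioc a (a + n)) := by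
    ext z; simp only [Finset.mem_Ioc, Finset.mem_insert]; omega
  unfold Uk
  rw [e, Finset.filter_insert]
  split_ifs with h
  · rw [Finset.card_insert_of_notMem (by simp)]; push_cast; rfl
  · simp

theorem slot_count (C : Car η ξ A σ) (k : ℕ) (n : ℕ) :
    Nk η ξ k (recPos ξ 0 + n) = cntk k (A (recPos ξ 0 + n)) - ξ (recPos ξ 0 + n)
      + 2 * (Uk η σ k (recPos ξ 0) (recPos ξ 0 + n)).card := by
  obtain ⟨p1, p2, p3⟩ := C.good.recPos_spec 0
  induction n with
  | zero =>
    simp only [Nat.cast_zero, add_zero]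
    rw [Nk_rec C.good, (C.recA _ p2).2, p1]
    simp [Uk, cntk]
  | succ n ih =>
    set a := recPos ξ 0
    have e : a + ((n + 1 : ℕ) : ℤ) = a + n + 1 := by push_cast; ring
    rw [e, Uk_succ]
    have s := Nk_step C.good k (a + n + 1)
    have l := C.good.lift (a + n + 1)
    have e2 : a + (n : ℤ) + 1 - 1 = a + n := by ring
    rw [e2] at s l
    rw [ik_eq C] at s
    by_cases hr : isRecord η (a + n + 1)
    · have hf := C.good.rec_false hr
      obtain ⟨a1, a2⟩ := C.recA _ hr
      rw [e2] at a1
      rw [a1] at ih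
      rw [a2]
      simp [hr, hf, valZ] at s l ⊢
      omega
    · cases hx : η (a + n + 1)
      · obtain ⟨d1, d2, d3⟩ := C.down _ hr hx
        rw [e2] at d1 d3
        have := cntk_erase k d1
        rw [d3]
        simp [hr, hx, valZ] at s l ⊢
        split_ifs at * <;> omega
      · obtain ⟨d1, d2, d3⟩ := C.up _ hx
        rw [e2] at d1 d3
        have := cntk_insert k d1
        rw [d3]
        simp [hr, hx, valZ] at s l ⊢
        split_ifs at * <;> omega

theorem lift_rec (h : Good η ξ) : liftT ξ (recPos ξ 0) = 0 := by
  obtain ⟨p1, p2, p3⟩ := h.recPos_spec 0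
  have e : runMin ξ (recPos ξ 0) = 0 := by
    have h1 := h.runMin_le le_rfl (x := recPos ξ 0) (y := recPos ξ 0)
    obtain ⟨y, hy, hy2⟩ := h.runMin_mem (recPos ξ 0)
    rcases eq_or_lt_of_le hy with rfl | hlt
    · omega
    · have := p3 y hlt; omega
  unfold liftT
  omega

theorem rec_le (h : Good η ξ) : recPos (liftT ξ) 0 ≤ recPos ξ 0 := by
  by_contra hc
  have := (h.next.recPos_spec 0).2.2 (recPos ξ 0) (by omega)
  rw [lift_rec h] at this
  omega

theorem step_index (C : Car η ξ A σ) (C' : Car (bbsT η) (liftT ξ) A' σ') {k : ℕ} {γ γ' : Finset ℤ}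
    (hγ : γ ∈ Gamma η k) (hγ' : γ' ∈ Gamma (bbsT η) k)
    (ht : headF (bbsT η) γ' = tailF η γ) :
    ind (bbsT η) (liftT ξ) k γ' = ind η ξ k γ + k +
      2 * (Uk (bbsT η) σ' k (recPos (liftT ξ) 0) (recPos ξ 0)).card := by
  have G := gamma_GP C hγ
  obtain ⟨x, x1, x2, x3⟩ := G.ex false (k - 1) (by have := G.pos; omega)
  have x4 : x ∈ γ' := (mem_head.1 (ht ▸ mem_tail.2 ⟨x1, x2⟩)).1
  have pv := potential_val C C' G.pos x2 (G.nrec x x1) x3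
  rw [← ind_spec C.good hγ x1, ← ind_spec C'.good hγ' x4]
  have key := const_of_step (F := fun x => Nk (bbsT η) (liftT ξ) k x - Nk η ξ k x
    - (cntk k (A x) + cntk k (A' x))) (fun x => by
      have := potential C C' k x
      have := Nk_step C.good k x
      have := Nk_step C'.good k x
      omega) x (recPos ξ 0)
  rw [pv, Nk_rec C.good, (C.recA _ (C.good.recPos_spec 0).2.1).2] at key
  obtain ⟨n, hn⟩ := Int.le.dest (rec_le C.good)
  have sc := slot_count C' k n
  rw [hn, lift_rec C.good] at sc
  have : cntk k ∅ = 0 := by simp [cntk]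
  omega

end


/-! ### Part 9: trajectories and crossings -/

section
variable {η : Cfg} {ξ : ℤ → ℤ} {A A' : ℤ → Finset ℕ} {σ σ' : ℤ → ℕ}

theorem GP.card_level {γ : Finset ℤ} {m : ℕ} (h : GP η σ γ m) (k : ℕ) (b : Bool) :
    (γ.filter fun x => η x = b ∧ k ≤ σ x).card = m - k := by
  rw [← Nat.card_Ico k m]
  apply Finset.card_bij (fun y _ => σ y)
  · intro y hy
    simp only [Finset.mem_filter] at hy
    simp only [Finset.mem_Ico]
    exact ⟨hy.2.2, h.lt y hy.1⟩
  · intro y hy z hz e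
    simp only [Finset.mem_filter] at hy hz
    exact h.inj hy.1 hz.1 (hy.2.1.trans hz.2.1.symm) e
  · intro j hj
    simp only [Finset.mem_Ico] at hj
    obtain ⟨x, x1, x2, x3⟩ := h.ex b j hj.2
    exact ⟨x, by simp only [Finset.mem_filter]; exact ⟨x1, x2, by omega⟩, x3⟩

theorem GP.card_level2 {γ : Finset ℤ} {m : ℕ} (h : GP η σ γ m) (k : ℕ) :
    (γ.filter fun x => k ≤ σ x).card = 2 * (m - k) := by
  have e : (γ.filter fun x => k ≤ σ x) =
      (γ.filter fun x => η x = true ∧ k ≤ σ x) ∪ (γ.filter fun x => η x = false ∧ k ≤ σ x) := by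
    ext x
    simp only [Finset.mem_filter, Finset.mem_union]
    cases η x <;> simp
  rw [e, Finset.card_union_of_disjoint, h.card_level, h.card_level]
  · omega
  · rw [Finset.disjoint_left]
    intro x h1 h2
    simp only [Finset.mem_filter] at h1 h2
    rw [h1.2.1] at h2
    simp at h2

theorem pair_count (X : ℕ → Set (Finset ℤ)) (hfin : ∀ m, (X m).Finite) (k M : ℕ)
    (hM : ∀ m, M < m → X m = ∅) (L : Finset ℤ → Finset ℤ) (c : ℕ → ℕ)
    (hL : ∀ m, k < m → ∀ γ ∈ X m, (L γ).card = c m)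
    (hd : ∀ m m' γ, γ ∈ X m → γ ∈ X m' → m = m') :
    Set.ncard {p : Finset ℤ × ℤ | ∃ m, k < m ∧ p.1 ∈ X m ∧ p.2 ∈ L p.1} =
      ∑ m ∈ Finset.Ioc k M, c m * (X m).ncard := by
  classical
  let F : ℕ → Finset (Finset ℤ × ℤ) := fun m =>
    (hfin m).toFinset.biUnion fun γ => (L γ).image fun x => (γ, x)
  have hmem : ∀ m p, p ∈ F m ↔ p.1 ∈ X m ∧ p.2 ∈ L p.1 := by
    intro m p
    obtain ⟨γ, x⟩ := p
    simp only [F, Finset.mem_biUnion, Set.Finite.mem_toFinset, Finset.mem_image, Prod.mk.injEq]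
    constructor
    · rintro ⟨a, h1, b, h2, rfl, rfl⟩; exact ⟨h1, h2⟩
    · rintro ⟨h1, h2⟩; exact ⟨γ, h1, x, h2, rfl, rfl⟩
  have e : {p : Finset ℤ × ℤ | ∃ m, k < m ∧ p.1 ∈ X m ∧ p.2 ∈ L p.1} =
      ((Finset.Ioc k M).biUnion F : Finset (Finset ℤ × ℤ)) := by
    ext p
    simp only [Set.mem_setOf_eq, Finset.coe_biUnion, Set.mem_iUnion, Finset.mem_coe, hmem,
      Finset.mem_Ioc]
    constructor
    · rintro ⟨m, h1, h2, h3⟩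
      refine ⟨m, ⟨h1, ?_⟩, h2, h3⟩
      by_contra hc
      rw [hM m (by omega)] at h2
      exact h2
    · rintro ⟨m, h1, h2, h3⟩
      exact ⟨m, h1.1, h2, h3⟩
  rw [e, Set.ncard_coe_finset, Finset.card_biUnion]
  · apply Finset.sum_congr rfl
    intro m hm
    simp only [F]
    rw [Finset.card_biUnion]
    · rw [Finset.sum_congr rfl (g := fun _ => c m)]
      · rw [Finset.sum_const, smul_eq_mul, mul_comm, Set.ncard_eq_toFinset_card _ (hfin m)]
      · intro γ hγ
        rw [Finset.card_image_of_injective _ (fun a b hab => by simpa using hab)]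
        exact hL m (Finset.mem_Ioc.1 hm).1 γ ((hfin m).mem_toFinset.1 hγ)
    · intro γ _ γ' _ hne
      rw [Function.onFun, Finset.disjoint_left]
      intro p h1 h2
      simp only [Finset.mem_image] at h1 h2
      obtain ⟨a, _, rfl⟩ := h1
      obtain ⟨b, _, hb⟩ := h2
      simp only [Prod.mk.injEq] at hb
      exact hne hb.1.symm
  · intro m _ m' _ hne
    rw [Function.onFun, Finset.disjoint_left]
    intro p h1 h2
    rw [hmem] at h1 h2
    exact hne (hd _ _ _ h1.1 h2.1)

theorem succ_exists (h : Good η ξ) {k : ℕ} {γ : Finset ℤ} (hγ : γ ∈ Gamma η k) :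
    ∃ γ' ∈ Gamma (bbsT η) k, headF (bbsT η) γ' = tailF η γ := by
  obtain ⟨A, σ, C⟩ := car_exists h
  obtain ⟨A', σ', C'⟩ := car_exists h.next
  exact match_fwd C C' hγ

theorem pred_exists (h : Good η ξ) {k : ℕ} {γ' : Finset ℤ} (hγ' : γ' ∈ Gamma (bbsT η) k) :
    ∃ γ ∈ Gamma η k, headF (bbsT η) γ' = tailF η γ := by
  obtain ⟨A, σ, C⟩ := car_exists h
  obtain ⟨A', σ', C'⟩ := car_exists h.next
  exact match_bwd C C' hγ'

theorem tail_ne (h : Good η ξ) {k : ℕ} {γ : Finset ℤ} (hγ : γ ∈ Gamma η k) :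
    ∃ x, x ∈ tailF η γ := by
  obtain ⟨A, σ, C⟩ := car_exists h
  have G := gamma_GP C hγ
  obtain ⟨x, x1, x2, _⟩ := G.ex false 0 G.pos
  exact ⟨x, mem_tail.2 ⟨x1, x2⟩⟩

theorem head_ne (h : Good η ξ) {k : ℕ} {γ : Finset ℤ} (hγ : γ ∈ Gamma η k) :
    ∃ x, x ∈ headF η γ := by
  obtain ⟨A, σ, C⟩ := car_exists h
  have G := gamma_GP C hγ
  obtain ⟨x, x1, x2, _⟩ := G.ex true 0 G.pos
  exact ⟨x, mem_head.2 ⟨x1, x2⟩⟩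

theorem tail_inj (h : Good η ξ) {k k' : ℕ} {γ γ' : Finset ℤ} (hγ : γ ∈ Gamma η k)
    (hγ' : γ' ∈ Gamma η k') (he : tailF η γ = tailF η γ') : γ = γ' := by
  obtain ⟨A, σ, C⟩ := car_exists h
  obtain ⟨x, hx⟩ := tail_ne h hγ
  exact gamma_uniq C hγ hγ' (mem_tail.1 hx).1 (mem_tail.1 (he ▸ hx)).1

theorem head_inj (h : Good η ξ) {k k' : ℕ} {γ γ' : Finset ℤ} (hγ : γ ∈ Gamma η k)
    (hγ' : γ' ∈ Gamma η k') (he : headF η γ = headF η γ') : γ = γ' := by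
  obtain ⟨A, σ, C⟩ := car_exists h
  obtain ⟨x, hx⟩ := head_ne h hγ
  exact gamma_uniq C hγ hγ' (mem_head.1 hx).1 (mem_head.1 (he ▸ hx)).1

theorem gamma_size (h : Good η ξ) {k k' : ℕ} {γ : Finset ℤ} (hγ : γ ∈ Gamma η k)
    (hγ' : γ ∈ Gamma η k') : k = k' := by
  obtain ⟨A, σ, C⟩ := car_exists h
  exact (gamma_GP C hγ).size (gamma_GP C hγ')

theorem traj_mem (h : Good η ξ) {k : ℕ} {γ : Finset ℤ} (hγ : γ ∈ Gamma η k) (t : ℕ) :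
    solTraj η k γ t ∈ Gamma (bbsT^[t] η) k := by
  induction t with
  | zero => exact hγ
  | succ t ih =>
    have he : ∃ γ' ∈ Gamma (bbsT^[t + 1] η) k,
        headF (bbsT^[t + 1] η) γ' = tailF (bbsT^[t] η) (solTraj η k γ t) := by
      rw [Function.iterate_succ_apply']
      exact succ_exists (h.iter t) ih
    rw [solTraj, dif_pos he]
    exact he.choose_spec.1

theorem traj_head (h : Good η ξ) {k : ℕ} {γ : Finset ℤ} (hγ : γ ∈ Gamma η k) (t : ℕ) :
    headF (bbsT^[t + 1] η) (solTraj η k γ (t + 1)) = tailF (bbsT^[t] η) (solTraj η k γ t) := by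
  have he : ∃ γ' ∈ Gamma (bbsT^[t + 1] η) k,
      headF (bbsT^[t + 1] η) γ' = tailF (bbsT^[t] η) (solTraj η k γ t) := by
    rw [Function.iterate_succ_apply']
    exact succ_exists (h.iter t) (traj_mem h hγ t)
  rw [solTraj, dif_pos he]
  exact he.choose_spec.2

theorem traj_succ (h : Good η ξ) {k : ℕ} {γ : Finset ℤ} (hγ : γ ∈ Gamma η k) (t : ℕ) :
    solTraj (bbsT^[t] η) k (solTraj η k γ t) 1 = solTraj η k γ (t + 1) := by
  have m := traj_mem h hγ t
  have a1 := traj_mem (h.iter t) m 1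
  have a2 := traj_head (h.iter t) m 0
  have b1 := traj_mem h hγ (t + 1)
  have b2 := traj_head h hγ t
  have hg := h.iter (t + 1)
  rw [Function.iterate_succ_apply'] at b1 b2 hg
  exact head_inj hg a1 b1 (a2.trans b2.symm)

theorem traj_inj (h : Good η ξ) {k : ℕ} {γ γ' : Finset ℤ} (hγ : γ ∈ Gamma η k)
    (hγ' : γ' ∈ Gamma η k) (t : ℕ) (he : solTraj η k γ t = solTraj η k γ' t) : γ = γ' := by
  induction t with
  | zero => exact he
  | succ t ih =>
    apply ih
    apply tail_inj (h.iter t) (traj_mem h hγ t) (traj_mem h hγ' t)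
    rw [← traj_head h hγ, ← traj_head h hγ', he]

theorem traj_surj (h : Good η ξ) {k : ℕ} (t : ℕ) : ∀ γ' ∈ Gamma (bbsT^[t] η) k,
    ∃ γ ∈ Gamma η k, solTraj η k γ t = γ' := by
  induction t with
  | zero => intro γ' h'; exact ⟨γ', h', rfl⟩
  | succ t ih =>
    intro γ' h'
    have h2 := h'
    rw [Function.iterate_succ_apply'] at h2
    obtain ⟨γ1, g1, g2⟩ := pred_exists (h.iter t) h2
    obtain ⟨γ, g3, g4⟩ := ih γ1 g1
    refine ⟨γ, g3, head_inj (h.iter (t + 1)) (traj_mem h g3 (t + 1)) h' ?_⟩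
    rw [traj_head h g3, g4, Function.iterate_succ_apply', g2]

/-- solitons of size `m` crossing Record `0` by time `t` -/
def Xs (η : Cfg) (ξ : ℤ → ℤ) (m t : ℕ) : Set (Finset ℤ) :=
  {γ | γ ∈ Gamma η m ∧ (∀ x ∈ γ, x < recPos ξ 0) ∧
    ∀ x ∈ solTraj η m γ t, recPos (liftT^[t] ξ) 0 ≤ x}

theorem Xs_iff (h : Good η ξ) (m t : ℕ) (γ : Finset ℤ) : γ ∈ Xs η ξ m t ↔
    γ ∈ Gamma η m ∧ ind η ξ m γ < 0 ∧
      0 ≤ ind (bbsT^[t] η) (liftT^[t] ξ) m (solTraj η m γ t) := by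
  unfold Xs
  rw [Set.mem_setOf_eq]
  refine and_congr_right fun hγ => ?_
  rw [ind_rec_lt h hγ, ind_rec_ge (h.iter t) (traj_mem h hγ t)]

theorem oOff_sum (h : Good η ξ) (k t M : ℕ) (hfin : ∀ m, (Xs η ξ m t).Finite)
    (hM : ∀ m, M < m → Xs η ξ m t = ∅) :
    oOff η ξ k t = ∑ m ∈ Finset.Ioc k M, 2 * (m - k) * (Xs η ξ m t).ncard := by
  obtain ⟨A, σ, C⟩ := car_exists h
  rw [← pair_count (fun m => Xs η ξ m t) hfin k M hM (fun γ => γ.filter fun x => k ≤ σ x)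
    (fun m => 2 * (m - k)) (fun m _ γ hγ => (gamma_GP C hγ.1).card_level2 k)
    (fun m m' γ h1 h2 => gamma_size h h1.1 h2.1)]
  unfold oOff
  congr 1
  ext p
  simp only [Set.mem_setOf_eq]
  refine exists_congr fun m => and_congr_right fun _ => ?_
  constructor
  · rintro ⟨h1, h2, h3, h4⟩
    rw [(gamma_GP C h1).level_iff] at h4
    exact ⟨⟨h1, h2, h3⟩, Finset.mem_filter.2 h4⟩
  · rintro ⟨⟨h1, h2, h3⟩, h4⟩
    refine ⟨h1, h2, h3, ?_⟩
    rw [(gamma_GP C h1).level_iff]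
    exact Finset.mem_filter.1 h4

end


/-! ### Part 10: main induction -/

section
variable {η : Cfg} {ξ : ℤ → ℤ} {A A' : ℤ → Finset ℕ} {σ σ' : ℤ → ℕ}

theorem cross_site (C : Car η ξ A σ) (C' : Car (bbsT η) (liftT ξ) A' σ') {m k : ℕ}
    {γ : Finset ℤ} (hγ : γ ∈ Xs η ξ m 1) {x : ℤ} (hx : x ∈ tailF η γ) (hk : k ≤ σ x) :
    x ∈ Uk (bbsT η) σ' k (recPos (liftT ξ) 0) (recPos ξ 0) := by
  obtain ⟨h1, h2, h3⟩ := hγ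
  have G := gamma_GP C h1
  obtain ⟨x1, x2⟩ := mem_tail.1 hx
  have xT : bbsT η x = true := (bbsT_true_iff η x).2 ⟨x2, G.nrec x x1⟩
  have hd := traj_head C.good h1 0
  have xh : x ∈ headF (bbsT η) (solTraj η m γ 1) := by
    have e : headF (bbsT η) (solTraj η m γ 1) = tailF η γ := hd
    rw [e]; exact hx
  have g := h3 x (mem_head.1 xh).1
  have g' : recPos (liftT ξ) 0 ≤ x := g
  have ne : recPos (liftT ξ) 0 ≠ x := by
    intro e
    have := (C'.good.recPos_spec 0).2.1
    rw [e] at this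
    exact true_nrec C'.good xT this
  unfold Uk
  rw [Finset.mem_filter, Finset.mem_Ioc]
  have := h2 x x1
  exact ⟨⟨by omega, by omega⟩, xT, by rw [sig_eq C C' xT]; exact hk⟩

theorem site_cross (C : Car η ξ A σ) (C' : Car (bbsT η) (liftT ξ) A' σ') {k : ℕ} {x : ℤ}
    (hx : x ∈ Uk (bbsT η) σ' k (recPos (liftT ξ) 0) (recPos ξ 0)) :
    ∃ m, k < m ∧ ∃ γ ∈ Xs η ξ m 1, x ∈ tailF η γ ∧ k ≤ σ x := by
  unfold Uk at hx
  rw [Finset.mem_filter, Finset.mem_Ioc] at hx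
  obtain ⟨⟨x1, x2⟩, xT, x3⟩ := hx
  obtain ⟨x4, x5⟩ := (bbsT_true_iff η x).1 xT
  rw [sig_eq C C' xT] at x3
  obtain ⟨m, γ, hγ, hxγ⟩ := gamma_cover C x5
  have G := gamma_GP C hγ
  have hd : headF (bbsT η) (solTraj η m γ 1) = tailF η γ := traj_head C.good hγ 0
  have hm : solTraj η m γ 1 ∈ Gamma (bbsT η) m := traj_mem C.good hγ 1
  have G' := gamma_GP C' hm
  have hx' : x ∈ solTraj η m γ 1 := by
    have : x ∈ headF (bbsT η) (solTraj η m γ 1) := by rw [hd]; exact mem_tail.2 ⟨hxγ, x4⟩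
    exact (mem_head.1 this).1
  refine ⟨m, by have := G.lt x hxγ; omega, γ, ⟨hγ, ?_, ?_⟩, mem_tail.2 ⟨hxγ, x4⟩, x3⟩
  · intro z hz
    by_contra hc
    exact (G.hull x hxγ z hz (recPos ξ 0) x2 (by omega)).1 (C.good.recPos_spec 0).2.1
  · intro z hz
    by_contra hc
    have hc : z < recPos (liftT ξ) 0 := not_le.1 hc
    exact (G'.hull z hz x hx' (recPos (liftT ξ) 0) hc.le x1.le).1 (C'.good.recPos_spec 0).2.1

theorem one_fin (h : Good η ξ) :
    (∀ m, (Xs η ξ m 1).Finite) ∧ ∃ M, ∀ m, M < m → Xs η ξ m 1 = ∅ := by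
  obtain ⟨A, σ, C⟩ := car_exists h
  obtain ⟨A', σ', C'⟩ := car_exists h.next
  let Y : Set (Finset ℤ) := ⋃ x ∈ (Uk (bbsT η) σ' 0 (recPos (liftT ξ) 0) (recPos ξ 0) : Set ℤ),
    {γ | ∃ m, γ ∈ Gamma η m ∧ x ∈ γ}
  have hY : Y.Finite := by
    apply Set.Finite.biUnion (Finset.finite_toSet _)
    intro x _
    apply Set.Subsingleton.finite
    rintro γ ⟨m, h1, h2⟩ γ' ⟨m', h1', h2'⟩
    exact gamma_uniq C h1 h1' h2 h2'
  have hsub : ∀ m, Xs η ξ m 1 ⊆ Y := by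
    intro m γ hγ
    obtain ⟨x, hx⟩ := tail_ne h hγ.1
    simp only [Y, Set.mem_iUnion]
    exact ⟨x, cross_site C C' hγ hx (Nat.zero_le _), m, hγ.1, (mem_tail.1 hx).1⟩
  refine ⟨fun m => hY.subset (hsub m), ?_⟩
  obtain ⟨M, hM⟩ := (hY.image Finset.card).bddAbove
  refine ⟨M, fun m hm => ?_⟩
  by_contra hc
  obtain ⟨γ, hγ⟩ := Set.nonempty_iff_ne_empty.2 hc
  have h1 := hM ⟨γ, hsub m hγ, rfl⟩
  have h2 := (gamma_GP C hγ.1).card_level2 0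
  have h3 := Finset.card_filter_le γ (fun x => 0 ≤ σ x)
  omega

theorem one_step (h : Good η ξ) {k : ℕ} {γ γ' : Finset ℤ}
    (hγ : γ ∈ Gamma η k) (hγ' : γ' ∈ Gamma (bbsT η) k)
    (ht : headF (bbsT η) γ' = tailF η γ) :
    ind (bbsT η) (liftT ξ) k γ' = ind η ξ k γ + k + oOff η ξ k 1 := by
  obtain ⟨A, σ, C⟩ := car_exists h
  obtain ⟨A', σ', C'⟩ := car_exists h.next
  obtain ⟨hfin, M, hM⟩ := one_fin h
  rw [step_index C C' hγ hγ' ht, oOff_sum h k 1 M hfin hM]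
  congr 1
  have pc := pair_count (fun m => Xs η ξ m 1) hfin k M hM
    (fun γ => γ.filter fun x => η x = false ∧ k ≤ σ x)
    (fun m => m - k) (fun m _ γ hγ => (gamma_GP C hγ.1).card_level k false)
    (fun m m' γ h1 h2 => gamma_size h h1.1 h2.1)
  have e : Set.ncard {p : Finset ℤ × ℤ | ∃ m, k < m ∧ p.1 ∈ Xs η ξ m 1 ∧
      p.2 ∈ p.1.filter fun x => η x = false ∧ k ≤ σ x} =
      (Uk (bbsT η) σ' k (recPos (liftT ξ) 0) (recPos ξ 0)).card := by
    rw [← Set.ncard_coe_finset]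
    apply Set.ncard_congr (fun p _ => p.2)
    · rintro ⟨γ, x⟩ ⟨m, h1, h2, h3⟩
      rw [Finset.mem_filter] at h3
      exact cross_site C C' h2 (mem_tail.2 ⟨h3.1, h3.2.1⟩) h3.2.2
    · rintro ⟨γ, x⟩ ⟨γ', x'⟩ ⟨m, h1, h2, h3⟩ ⟨m', h1', h2', h3'⟩ he
      rw [Finset.mem_filter] at h3 h3'
      simp only at he h2 h3 h2' h3'
      subst he
      rw [gamma_uniq C h2.1 h2'.1 h3.1 h3'.1]
    · intro x hx
      obtain ⟨m, h1, γ, h2, h3, h4⟩ := site_cross C C' hx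
      obtain ⟨h5, h6⟩ := mem_tail.1 h3
      exact ⟨(γ, x), ⟨m, h1, h2, Finset.mem_filter.2 ⟨h5, h6, h4⟩⟩, rfl⟩
  rw [← e, pc]
  push_cast
  rw [Finset.mul_sum]
  apply Finset.sum_congr rfl
  intro m _
  ring

theorem main_t (h : Good η ξ) (t : ℕ) :
    (∀ m, (Xs η ξ m t).Finite) ∧ (∃ M, ∀ m, M < m → Xs η ξ m t = ∅) ∧
    ∀ k, ∀ γ ∈ Gamma η k, ind (bbsT^[t] η) (liftT^[t] ξ) k (solTraj η k γ t) =
      ind η ξ k γ + k * t + oOff η ξ k t := by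
  induction t with
  | zero =>
    have e : ∀ m, Xs η ξ m 0 = ∅ := by
      intro m
      rw [Set.eq_empty_iff_forall_notMem]
      intro γ hγ
      rw [Xs_iff h] at hγ
      have h1 := hγ.2.1
      have h2 : 0 ≤ ind η ξ m γ := hγ.2.2
      omega
    refine ⟨fun m => by rw [e]; exact Set.finite_empty, ⟨0, fun m _ => e m⟩, ?_⟩
    intro k γ hγ
    rw [oOff_sum h k 0 0 (fun m => by rw [e]; exact Set.finite_empty) (fun m _ => e m)]
    simp [solTraj]
  | succ t ih =>
    obtain ⟨f1, ⟨M1, hM1⟩, i1⟩ := ih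
    have ht := h.iter t
    obtain ⟨f2, M2, hM2⟩ := one_fin ht
    have step : ∀ k, ∀ γ ∈ Gamma η k,
        ind (bbsT^[t + 1] η) (liftT^[t + 1] ξ) k (solTraj η k γ (t + 1)) =
        ind (bbsT^[t] η) (liftT^[t] ξ) k (solTraj η k γ t) + k +
          oOff (bbsT^[t] η) (liftT^[t] ξ) k 1 := by
      intro k γ hγ
      have m1 := traj_mem h hγ (t + 1)
      have m2 := traj_head h hγ t
      rw [Function.iterate_succ_apply'] at m1 m2
      rw [Function.iterate_succ_apply', Function.iterate_succ_apply']
      exact one_step ht (traj_mem h hγ t) m1 m2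
    let Z : ℕ → Set (Finset ℤ) := fun m =>
      {γ | γ ∈ Gamma η m ∧ solTraj η m γ t ∈ Xs (bbsT^[t] η) (liftT^[t] ξ) m 1}
    have hZ : ∀ m γ, γ ∈ Z m ↔ γ ∈ Gamma η m ∧
        ind (bbsT^[t] η) (liftT^[t] ξ) m (solTraj η m γ t) < 0 ∧
        0 ≤ ind (bbsT^[t + 1] η) (liftT^[t + 1] ξ) m (solTraj η m γ (t + 1)) := by
      intro m γ
      refine and_congr_right fun hγ => ?_
      rw [Xs_iff ht, traj_succ h hγ, Function.iterate_succ_apply' bbsT t, Function.iterate_succ_apply' liftT t]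
      exact and_iff_right (traj_mem h hγ t)
    have hU : ∀ m, Xs η ξ m (t + 1) = Xs η ξ m t ∪ Z m := by
      intro m
      ext γ
      rw [Set.mem_union, Xs_iff h, Xs_iff h, hZ]
      by_cases hγ : γ ∈ Gamma η m
      · have a := step m γ hγ
        have b := i1 m γ hγ
        have c : (0 : ℤ) ≤ m * t := by positivity
        simp only [hγ, true_and]
        omega
      · simp [hγ]
    have hD : ∀ m, Disjoint (Xs η ξ m t) (Z m) := by
      intro m
      rw [Set.disjoint_left]
      intro γ h1 h2
      rw [Xs_iff h] at h1
      rw [hZ] at h2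
      omega
    have hI : ∀ m, Set.InjOn (fun γ => solTraj η m γ t) (Z m) :=
      fun m γ hγ γ' hγ' he => traj_inj h hγ.1 hγ'.1 t he
    have hIm : ∀ m, (fun γ => solTraj η m γ t) '' Z m = Xs (bbsT^[t] η) (liftT^[t] ξ) m 1 := by
      intro m
      ext γ'
      constructor
      · rintro ⟨γ, hγ, rfl⟩; exact hγ.2
      · intro hγ'
        obtain ⟨γ, g1, g2⟩ := traj_surj h t γ' hγ'.1
        exact ⟨γ, ⟨g1, by rw [g2]; exact hγ'⟩, g2⟩
    have hZf : ∀ m, (Z m).Finite := fun m =>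
      Set.Finite.of_finite_image (by rw [hIm]; exact f2 m) (hI m)
    have hZc : ∀ m, (Z m).ncard = (Xs (bbsT^[t] η) (liftT^[t] ξ) m 1).ncard := by
      intro m
      rw [← hIm, Set.ncard_image_of_injOn (hI m)]
    have f3 : ∀ m, (Xs η ξ m (t + 1)).Finite := fun m => by
      rw [hU]; exact (f1 m).union (hZf m)
    have hM3 : ∀ m, max M1 M2 < m → Xs η ξ m (t + 1) = ∅ := by
      intro m hm
      have hz : Z m = ∅ := by
        rw [← Set.image_eq_empty, hIm]; exact hM2 m (by omega)
      rw [hU, hM1 m (by omega), hz, Set.union_empty]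
    refine ⟨f3, ⟨_, hM3⟩, ?_⟩
    intro k γ hγ
    have hoff : oOff η ξ k (t + 1) = oOff η ξ k t + oOff (bbsT^[t] η) (liftT^[t] ξ) k 1 := by
      rw [oOff_sum h k (t + 1) (max M1 M2) f3 hM3,
        oOff_sum h k t (max M1 M2) f1 (fun m hm => hM1 m (by omega)),
        oOff_sum ht k 1 (max M1 M2) f2 (fun m hm => hM2 m (by omega)), ← Finset.sum_add_distrib]
      apply Finset.sum_congr rfl
      intro m _
      rw [hU, Set.ncard_union_eq (hD m) (f1 m) (hZf m), hZc, mul_add]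
    rw [step k γ hγ, i1 k γ hγ, hoff]
    push_cast
    ring

theorem Jcount (h : Good η ξ) (m t : ℕ) : (Xs η ξ m t).ncard =
    ∑ i ∈ Finset.Ico (-((oOff η ξ m t : ℤ) + m * t)) 0, Mk η ξ m i := by
  obtain ⟨f1, -, i1⟩ := main_t h t
  classical
  let W : ℤ → Finset (Finset ℤ) := fun i => (f1 m).toFinset.filter fun γ => ind η ξ m γ = i
  have hmem : ∀ γ, γ ∈ Xs η ξ m t ↔ γ ∈ Gamma η m ∧
      ind η ξ m γ ∈ Finset.Ico (-((oOff η ξ m t : ℤ) + m * t)) 0 := by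
    intro γ
    rw [Xs_iff h, Finset.mem_Ico]
    refine and_congr_right fun hγ => ?_
    rw [i1 m γ hγ]
    omega
  rw [Set.ncard_eq_toFinset_card _ (f1 m), Finset.card_eq_sum_card_fiberwise (f := ind η ξ m)
    (t := Finset.Ico (-((oOff η ξ m t : ℤ) + m * t)) 0)
    (fun γ hγ => ((hmem γ).1 ((f1 m).mem_toFinset.1 hγ)).2)]
  apply Finset.sum_congr rfl
  intro i hi
  rw [Mk_eq h, ← Set.ncard_coe_finset]
  congr 1
  ext γ
  simp only [Finset.coe_filter, Set.mem_setOf_eq, Set.Finite.mem_toFinset]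
  constructor
  · rintro ⟨h1, h2⟩; exact ⟨h1.1, h2⟩
  · rintro ⟨h1, h2⟩; exact ⟨(hmem γ).2 ⟨h1, by rw [h2]; exact hi⟩, h2⟩

theorem off_det (h : Good η ξ) {η' : Cfg} {ξ' : ℤ → ℤ} (h' : Good η' ξ') (t k : ℕ)
    (hM : ∀ m : ℕ, k < m → ∀ i : ℤ, Mk η ξ m i = Mk η' ξ' m i) :
    oOff η ξ k t = oOff η' ξ' k t := by
  obtain ⟨f1, ⟨M1, hM1⟩, -⟩ := main_t h t
  obtain ⟨f2, ⟨M2, hM2⟩, -⟩ := main_t h' t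
  have s1 := fun n => oOff_sum h n t (max M1 M2) f1 (fun m hm => hM1 m (by omega))
  have s2 := fun n => oOff_sum h' n t (max M1 M2) f2 (fun m hm => hM2 m (by omega))
  have key : ∀ d n, k ≤ n → max M1 M2 ≤ n + d → oOff η ξ n t = oOff η' ξ' n t := by
    intro d
    induction d with
    | zero =>
      intro n _ hn
      rw [s1, s2, Finset.Ioc_eq_empty (by omega)]; simp
    | succ d ih =>
      intro n hkn hn
      rw [s1, s2]
      apply Finset.sum_congr rfl
      intro m hm
      rw [Finset.mem_Ioc] at hm
      rw [Jcount h, Jcount h', ih m (by omega) (by omega),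
        Finset.sum_congr rfl (fun i _ => hM m (by omega) i)]
  exact key (max M1 M2) k le_rfl (by omega)

theorem hierarchy (h : Good η ξ) (t : ℕ) :
    (∀ k : ℕ, ∀ γ ∈ Gamma η k,
      Set.ncard {i : ℤ | (∀ x ∈ γ, x < skEnum η ξ k i) ∧
        ∀ x ∈ solTraj η k γ t, skEnumT η ξ k t i ≤ x} = k * t) ∧
    (∀ k : ℕ, ∀ i : ℤ,
      Mk (bbsT^[t] η) (liftT^[t] ξ) k i =
        Mk η ξ k (i - (oOff η ξ k t : ℤ) - (k : ℤ) * (t : ℤ))) := by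
  obtain ⟨-, -, i1⟩ := main_t h t
  have ht := h.iter t
  constructor
  · intro k γ hγ
    have e : {i : ℤ | (∀ x ∈ γ, x < skEnum η ξ k i) ∧
        ∀ x ∈ solTraj η k γ t, skEnumT η ξ k t i ≤ x} =
        (Finset.Ioc (ind η ξ k γ) (ind η ξ k γ + k * t) : Finset ℤ) := by
      ext i
      simp only [Set.mem_setOf_eq, Finset.coe_Ioc, Set.mem_Ioc]
      unfold skEnumT
      rw [ind_lt h hγ, ind_ge ht (traj_mem h hγ t), i1 k γ hγ]
      omega
    rw [e, Set.ncard_coe_finset, Int.card_Ioc]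
    have : ind η ξ k γ + (k : ℤ) * t - ind η ξ k γ = ((k * t : ℕ) : ℤ) := by push_cast; ring
    rw [this, Int.toNat_natCast]
  · intro k i
    rw [Mk_eq ht, Mk_eq h]
    symm
    apply Set.ncard_congr (fun γ _ => solTraj η k γ t)
    · rintro γ ⟨h1, h2⟩
      refine ⟨traj_mem h h1 t, ?_⟩
      rw [i1 k γ h1, h2]; ring
    · rintro γ γ' ⟨h1, _⟩ ⟨h2, _⟩ he
      exact traj_inj h h1 h2 t he
    · rintro γ' ⟨h1, h2⟩
      obtain ⟨γ, g1, rfl⟩ := traj_surj h t γ' h1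
      refine ⟨γ, ⟨g1, ?_⟩, rfl⟩
      rw [i1 k γ g1] at h2
      omega

end

/-- **hierarchy theorem.** Let `ξ` be a walk lift (with finite
running minimum) of some `η ∈ 𝒳` and let `t ≥ 1`.  Then:
(i) for every `k ≥ 1` and every `k`-soliton `γ` of `η`, the right-to-left flow
of relabeled `k`-slots through the tagged soliton between times `0` and `t` is
exactly `k·t`;
(ii) the `k`-component of `T^t ξ` is a shift of that of `ξ`:
`M_k(T^t ξ)(i) = M_k ξ(i − o_k^t(ξ) − kt)`;
(iii) for each `k`, the offset `o_k^t(ξ)` is determined by the components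
`(M_m ξ)_{m>k}` alone. -/
theorem component_hierarchy (η : Cfg) (ξ : ℤ → ℤ) (hη : inX η)
    (hlift : IsLift η ξ) (hbdd : ∀ x : ℤ, BddBelow (ξ '' Set.Iic x))
    (t : ℕ) (ht : 1 ≤ t) :
    (∀ k : ℕ, 1 ≤ k → ∀ γ ∈ Gamma η k,
      Set.ncard {i : ℤ | (∀ x ∈ γ, x < skEnum η ξ k i) ∧
        ∀ x ∈ solTraj η k γ t, skEnumT η ξ k t i ≤ x} = k * t) ∧
    (∀ k : ℕ, 1 ≤ k → ∀ i : ℤ,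
      Mk (bbsT^[t] η) (liftT^[t] ξ) k i =
        Mk η ξ k (i - (oOff η ξ k t : ℤ) - (k : ℤ) * (t : ℤ))) ∧
    (∀ (η' : Cfg) (ξ' : ℤ → ℤ), inX η' → IsLift η' ξ' →
      (∀ x : ℤ, BddBelow (ξ' '' Set.Iic x)) →
      ∀ k : ℕ, 1 ≤ k → (∀ m : ℕ, k < m → ∀ i : ℤ, Mk η ξ m i = Mk η' ξ' m i) →
        oOff η ξ k t = oOff η' ξ' k t) := by
  have h := good_of_inX hη hlift
  refine ⟨fun k _ γ hγ => (hierarchy h t).1 k γ hγ, fun k _ i => (hierarchy h t).2 k i, ?_⟩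
  intro η' ξ' hη' hl' _ k _ hM
  exact off_det h (good_of_inX hη' hl') t k hM
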